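/- Let X be a random vector in ℝ^d, d ≥ 1. Then I_X is strictly convex (on all of D(I_X)) if and only if int D(K_X) ≠ ∅, K_X has the projection property, and K_X is totally steep. -/

import Mathlib

/-!
Write `M = E[exp(u·X)]`, so that `K = log M`, and call `p` a subgradient of `K` at `u` if
`exp((w - u)·p) M(u) ≤ M(w)` for all `w`; then `I(p) = u·p - K(u)`.

**Necessity.** Each condition fails only if `I` is affine on some ray. If `D(K)` has empty interior
it lies in a hyperplane and `I` is constant along its normal (`interior_nonempty_of_strict`). If `K`
has a subgradient `p` at a boundary point of `D(K)` with outer normal `n`, then `I` is affine on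
`p + tn`; such a `p` is a limit of gradients when steepness fails (`steep_of_strict`). For a
hyperplane `L` with normal `ℓ` supporting `C_X` and charged by `X`, letting `u` run to infinity along
`ℓ` shows that on `L` the rate function only sees the values of `E[exp(u·X); X ∈ L]` on the closure of
the cylinder `int D(K) + ℝℓ` (`exp_le_lap_restrict`). The projection condition for `L` says that
`int D(K_{X|L})` is contained in this cylinder (`proj_eq_iff`); otherwise a boundary point of the
cylinder in `int D(K_{X|L})` again yields a ray on which `I` is affine (`interior_cond_subset_cyl`).
When the projection condition holds, `I_X` and `I_{X|L}` differ on `L` by the constant `log P(X ∈ L)`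
(`rateFn_eq_iff_cond`), so strict convexity passes to `X|L`. Maximal proper faces are exposed
(`IsMaxProperFace.exposed`), so conditioning on a face in `F*₊(C_X)` is conditioning on such an `L`,
and the recursive parts of both properties follow by induction on the depth.

**Sufficiency.** Suppose `I` is affine on `[x, y]` with `x ≠ y`, and let `v` be the midpoint. If the
supremum defining `I(v)` is attained at `u`, then `x` and `y` are subgradients of `K` at `u`;
steepness puts `u` in `int D(K)`, where `K` is differentiable, so `x = y`
(`eq_of_affine_of_subgrad`). If it is not attained, `v` lies on a hyperplane `L` bounding a
half-space that carries `X` nontrivially (`exists_subgrad_or`), and so do `x` and `y`. The face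
`L ∩ C_X` lies in a maximal proper face `C`, the projection condition shows that `I_{X|C}` is finite and
affine on `[x, y]`, and induction on the dimension of `C_X` gives a contradiction
(`strict_of_conditions`).
-/

open MeasureTheory ProbabilityTheory Set Filter Topology
open scoped RealInnerProductSpace ENNReal ProbabilityTheory

noncomputable section

/-- The topological support of a measure on `ℝ^d`: the smallest closed set of full measure,
equivalently the set of points all of whose neighbourhoods have positive measure. -/
def msupp {d : ℕ} (μ : Measure (EuclideanSpace ℝ (Fin d))) : Set (EuclideanSpace ℝ (Fin d)) :=
  {x | ∀ U : Set (EuclideanSpace ℝ (Fin d)), IsOpen U → x ∈ U → 0 < μ U}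

/-- The convex support `C_X` of a random vector with law `μ`. -/
def convSupp {d : ℕ} (μ : Measure (EuclideanSpace ℝ (Fin d))) : Set (EuclideanSpace ℝ (Fin d)) :=
  convexHull ℝ (msupp μ)

/-- The logarithmic Laplace transform `K_X(u) = log E[exp(u·X)]`, with values in `(-∞, +∞]`. -/
def logLaplace {d : ℕ} (μ : Measure (EuclideanSpace ℝ (Fin d)))
    (u : EuclideanSpace ℝ (Fin d)) : EReal :=
  (∫⁻ x, ENNReal.ofReal (Real.exp ⟪u, x⟫) ∂μ).log

/-- The rate function `I_X(v) = sup_u (u·v - K_X(u))`. -/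
def rateFn {d : ℕ} (μ : Measure (EuclideanSpace ℝ (Fin d)))
    (v : EuclideanSpace ℝ (Fin d)) : EReal :=
  ⨆ u : EuclideanSpace ℝ (Fin d), ((⟪u, v⟫ : ℝ) : EReal) - logLaplace μ u

/-- The effective domain of an extended-real-valued function. -/
def edom {α : Type*} (f : α → EReal) : Set α := {x | f x < ⊤}

/-- The affine hyperplane with unit normal `ℓ` and offset `c`. -/
def hyp {d : ℕ} (ℓ : EuclideanSpace ℝ (Fin d)) (c : ℝ) : Set (EuclideanSpace ℝ (Fin d)) :=
  {v | ⟪ℓ, v⟫ = c}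

/-- The hyperplane `{v : ℓ·v = c}` supports the convex set `C`: it meets `C` and `C` lies in
one of the two closed half-spaces bounded by it. -/
def SupportsSet {d : ℕ} (ℓ : EuclideanSpace ℝ (Fin d)) (c : ℝ)
    (C : Set (EuclideanSpace ℝ (Fin d))) : Prop :=
  (hyp ℓ c ∩ C).Nonempty ∧ ((∀ x ∈ C, ⟪ℓ, x⟫ ≤ c) ∨ (∀ x ∈ C, c ≤ ⟪ℓ, x⟫))

/-- Orthogonal projection onto the hyperplane `{v : ℓ·v = c}` (for `‖ℓ‖ = 1`). -/
def projHyp {d : ℕ} (ℓ : EuclideanSpace ℝ (Fin d)) (c : ℝ)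
    (v : EuclideanSpace ℝ (Fin d)) : EuclideanSpace ℝ (Fin d) :=
  v + (c - ⟪ℓ, v⟫) • ℓ

/-- A face of a convex set: a convex subset `F ⊆ C` such that any closed segment of `C` having
a relative interior point in `F` has both endpoints in `F`. -/
def IsFaceOf {V : Type*} [AddCommGroup V] [Module ℝ V] (C F : Set V) : Prop :=
  Convex ℝ F ∧ IsExtreme ℝ C F

/-- A maximal proper face of a convex set: a nonempty proper face contained in no face
other than `C` and itself. -/
def IsMaxProperFace {V : Type*} [AddCommGroup V] [Module ℝ V] (C F : Set V) : Prop :=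
  IsFaceOf C F ∧ F.Nonempty ∧ F ≠ C ∧
    ∀ F', IsFaceOf C F' → F'.Nonempty → F ⊆ F' → F' = C ∨ F' = F

/-- `F*₊(C_X)`: the maximal proper faces of the convex support carrying positive probability. -/
def facesPlus {d : ℕ} (μ : Measure (EuclideanSpace ℝ (Fin d))) :
    Set (Set (EuclideanSpace ℝ (Fin d))) :=
  {C | IsMaxProperFace (convSupp μ) C ∧ 0 < μ C}

/-- `K_X` is steep: `|∇K_X(u_n)| → ∞` along every sequence in the interior of `D(K_X)`
converging to a boundary point of `D(K_X)`. -/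
def Steep {d : ℕ} (μ : Measure (EuclideanSpace ℝ (Fin d))) : Prop :=
  ∀ (u : ℕ → EuclideanSpace ℝ (Fin d)) (u₀ : EuclideanSpace ℝ (Fin d)),
    (∀ n, u n ∈ interior (edom (logLaplace μ))) → Tendsto u atTop (𝓝 u₀) →
    u₀ ∈ frontier (edom (logLaplace μ)) →
    Tendsto (fun n => ‖gradient (fun w => (logLaplace μ w).toReal) (u n)‖) atTop atTop

/-- Condition (a) of the projection property: for every hyperplane `L` supporting `C_X` with
`0 < P(X ∈ L) < 1`, the projections on `L` of the relative interiors of `D(K_X)` and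
`D(K_{X|L})` coincide. -/
def CondA {d : ℕ} (μ : Measure (EuclideanSpace ℝ (Fin d))) : Prop :=
  ∀ (ℓ : EuclideanSpace ℝ (Fin d)) (c : ℝ), ‖ℓ‖ = 1 → SupportsSet ℓ c (convSupp μ) →
    0 < μ (hyp ℓ c) → μ (hyp ℓ c) < 1 →
    projHyp ℓ c '' intrinsicInterior ℝ (edom (logLaplace μ)) =
      projHyp ℓ c '' intrinsicInterior ℝ (edom (logLaplace (μ[|hyp ℓ c])))

/-- Depth-`n` truncation of the (well-founded) recursive definition of the projection property. -/
def ProjPropN {d : ℕ} : ℕ → Measure (EuclideanSpace ℝ (Fin d)) → Prop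
  | 0, μ => CondA μ
  | n + 1, μ => CondA μ ∧ ∀ C ∈ facesPlus μ, ProjPropN n (μ[|C])

/-- `K_X` has the projection property: condition (a) holds, and `K_{X|C}` has the projection
property for every `C ∈ F*₊(C_X)`. (The recursion on the dimension of `C_X` terminates in at
most `d` steps, so this is equivalent to all finite-depth truncations holding.) -/
def ProjProp {d : ℕ} (μ : Measure (EuclideanSpace ℝ (Fin d))) : Prop :=
  ∀ n, ProjPropN n μ

/-- Depth-`n` truncation of the recursive definition of total steepness. -/
def TotallySteepN {d : ℕ} : ℕ → Measure (EuclideanSpace ℝ (Fin d)) → Prop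
  | 0, μ => Steep μ
  | n + 1, μ => Steep μ ∧ ∀ C ∈ facesPlus μ, TotallySteepN n (μ[|C])

/-- `K_X` is totally steep: `K_X` is steep and `K_{X|C}` is totally steep for every
`C ∈ F*₊(C_X)`. -/
def TotallySteep {d : ℕ} (μ : Measure (EuclideanSpace ℝ (Fin d))) : Prop :=
  ∀ n, TotallySteepN n μ

/-- `f` is strictly convex on `A`: `f` is affine on no nondegenerate segment contained in `A`. -/
def StrictlyConvexOnSet {d : ℕ} (f : EuclideanSpace ℝ (Fin d) → EReal)
    (A : Set (EuclideanSpace ℝ (Fin d))) : Prop :=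
  ∀ x y : EuclideanSpace ℝ (Fin d), segment ℝ x y ⊆ A → x ≠ y →
    ¬ ∀ t : ℝ, t ∈ Icc (0 : ℝ) 1 →
      f ((1 - t) • x + t • y) = ((1 - t : ℝ) : EReal) * f x + ((t : ℝ) : EReal) * f y

/-! ### The Laplace transform and the rate function -/

/-- The Laplace transform `M(u) = E[exp(u·X)]` with values in `[0, ∞]`, so that `K = log M`. -/
def lap {d : ℕ} (μ : Measure (EuclideanSpace ℝ (Fin d)))
    (u : EuclideanSpace ℝ (Fin d)) : ℝ≥0∞ :=
  ∫⁻ x, ENNReal.ofReal (Real.exp ⟪u, x⟫) ∂μ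

/-- `p` is a subgradient of `K = log M` at `u`, written multiplicatively:
`exp((w - u)·p) M(u) ≤ M(w)` for all `w`. -/
def Subgrad {d : ℕ} (μ : Measure (EuclideanSpace ℝ (Fin d)))
    (u p : EuclideanSpace ℝ (Fin d)) : Prop :=
  ∀ w, ENNReal.ofReal (Real.exp ⟪w - u, p⟫) * lap μ u ≤ lap μ w

section Laplace

variable {d : ℕ} {μ : Measure (EuclideanSpace ℝ (Fin d))}

lemma logLaplace_eq (u : EuclideanSpace ℝ (Fin d)) : logLaplace μ u = (lap μ u).log := rfl

lemma mem_edom_iff {u : EuclideanSpace ℝ (Fin d)} :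
    u ∈ edom (logLaplace μ) ↔ lap μ u < ⊤ := by
  simp [edom, logLaplace_eq]

lemma measurable_expInner (u : EuclideanSpace ℝ (Fin d)) :
    Measurable fun x : EuclideanSpace ℝ (Fin d) => ENNReal.ofReal (Real.exp ⟪u, x⟫) := by
  fun_prop

lemma lap_pos [NeZero μ] (u : EuclideanSpace ℝ (Fin d)) : 0 < lap μ u := by
  unfold lap
  rw [lintegral_pos_iff_support (measurable_expInner u)]
  have : Function.support (fun x : EuclideanSpace ℝ (Fin d) =>
      ENNReal.ofReal (Real.exp ⟪u, x⟫)) = univ := by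
    ext x; simp [Real.exp_pos]
  rw [this]
  exact Measure.measure_univ_pos.2 (NeZero.ne μ)

lemma lap_zero : lap μ 0 = μ univ := by simp [lap]

lemma zero_mem_edom [IsFiniteMeasure μ] : (0 : EuclideanSpace ℝ (Fin d)) ∈ edom (logLaplace μ) := by
  rw [mem_edom_iff, lap_zero]; exact measure_lt_top _ _

lemma lap_mono {ν : Measure (EuclideanSpace ℝ (Fin d))} (h : ν ≤ μ)
    (u : EuclideanSpace ℝ (Fin d)) : lap ν u ≤ lap μ u :=
  lintegral_mono' h le_rfl

lemma lap_combo (u w : EuclideanSpace ℝ (Fin d)) {a b : ℝ} (ha : 0 ≤ a) (hb : 0 ≤ b)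
    (hab : a + b = 1) :
    lap μ (a • u + b • w) ≤ ENNReal.ofReal a * lap μ u + ENNReal.ofReal b * lap μ w := by
  unfold lap
  rw [← lintegral_const_mul _ (measurable_expInner u),
    ← lintegral_const_mul _ (measurable_expInner w),
    ← lintegral_add_left ((measurable_expInner u).const_mul _)]
  refine lintegral_mono fun x => ?_
  rw [← ENNReal.ofReal_mul ha, ← ENNReal.ofReal_mul hb,
    ← ENNReal.ofReal_add (by positivity) (by positivity)]
  refine ENNReal.ofReal_le_ofReal ?_
  rw [inner_add_left, real_inner_smul_left, real_inner_smul_left]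
  have := convexOn_exp.2 (mem_univ ⟪u, x⟫) (mem_univ ⟪w, x⟫) ha hb hab
  simpa using this

lemma convex_edom : Convex ℝ (edom (logLaplace μ)) := by
  intro u hu w hw a b ha hb hab
  rw [mem_edom_iff] at *
  refine (lap_combo u w ha hb hab).trans_lt ?_
  exact ENNReal.add_lt_top.2 ⟨ENNReal.mul_lt_top (by simp) hu, ENNReal.mul_lt_top (by simp) hw⟩

/-- Fatou's lemma makes the Laplace transform lower semicontinuous. -/
lemma lowerSemicontinuous_lap : LowerSemicontinuous (lap μ) := by
  intro u₀
  change LowerSemicontinuousAt _ _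
  rw [lowerSemicontinuousAt_iff_le_liminf]
  refine le_trans ?_ (lintegral_liminf_le (fun u => measurable_expInner u))
  refine lintegral_mono fun x => ?_
  have : Tendsto (fun u : EuclideanSpace ℝ (Fin d) => ENNReal.ofReal (Real.exp ⟪u, x⟫)) (𝓝 u₀)
      (𝓝 (ENNReal.ofReal (Real.exp ⟪u₀, x⟫))) := by
    refine Continuous.tendsto (ENNReal.continuous_ofReal.comp ?_) u₀
    fun_prop
  exact this.liminf_eq.ge

/-- The sublevel sets of the rate function in terms of the Laplace transform. -/
lemma rateFn_le_iff (v : EuclideanSpace ℝ (Fin d)) (a : ℝ) :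
    rateFn μ v ≤ (a : EReal) ↔ ∀ u, ENNReal.ofReal (Real.exp (⟪u, v⟫ - a)) ≤ lap μ u := by
  unfold rateFn
  rw [iSup_le_iff]
  refine forall_congr' fun u => ?_
  rw [logLaplace_eq, ← ENNReal.log_le_log_iff, ENNReal.log_ofReal_of_pos (Real.exp_pos _),
    Real.log_exp]
  induction h : (lap μ u).log using EReal.rec with
  | bot =>
    refine iff_of_false ?_ (not_le.2 (EReal.bot_lt_coe _))
    simp
  | top => simp
  | coe k => norm_cast; constructor <;> intro h <;> linarith

lemma eq_coe_of_forall_le_iff {r : EReal} {b : ℝ} (h : ∀ a : ℝ, r ≤ (a : EReal) ↔ b ≤ a) :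
    r = (b : EReal) := by
  apply le_antisymm ((h b).2 le_rfl)
  induction r using EReal.rec with
  | bot => have := (h (b - 1)).1 bot_le; linarith
  | top => exact le_top
  | coe k => exact_mod_cast (h k).1 le_rfl

/-- The real-valued logarithmic Laplace transform (only meaningful on `D(K)`). -/
def rlog {d : ℕ} (μ : Measure (EuclideanSpace ℝ (Fin d))) (u : EuclideanSpace ℝ (Fin d)) : ℝ :=
  Real.log (lap μ u).toReal

lemma toReal_logLaplace [NeZero μ] (u : EuclideanSpace ℝ (Fin d)) :
    (logLaplace μ u).toReal = rlog μ u := by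
  rw [logLaplace_eq, rlog]
  by_cases h : lap μ u = ⊤
  · simp [h]
  · rw [ENNReal.log_pos_real (lap_pos u).ne' h, EReal.toReal_coe]

lemma ofReal_exp_rlog [NeZero μ] {u : EuclideanSpace ℝ (Fin d)} (hu : lap μ u < ⊤) :
    ENNReal.ofReal (Real.exp (rlog μ u)) = lap μ u := by
  rw [rlog, Real.exp_log (ENNReal.toReal_pos (lap_pos u).ne' hu.ne), ENNReal.ofReal_toReal hu.ne]

lemma ofReal_exp_le_lap_iff [NeZero μ] {u : EuclideanSpace ℝ (Fin d)} (hu : lap μ u < ⊤) (a : ℝ) :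
    ENNReal.ofReal (Real.exp a) ≤ lap μ u ↔ a ≤ rlog μ u := by
  rw [← ofReal_exp_rlog hu, ENNReal.ofReal_le_ofReal_iff (Real.exp_pos _).le, Real.exp_le_exp]

lemma subgrad_iff [NeZero μ] {u p : EuclideanSpace ℝ (Fin d)} (hu : lap μ u < ⊤) :
    Subgrad μ u p ↔ ∀ w, lap μ w < ⊤ → rlog μ u + ⟪w - u, p⟫ ≤ rlog μ w := by
  refine forall_congr' fun w => ?_
  by_cases hw : lap μ w < ⊤
  · rw [← ofReal_exp_rlog hu, ← ENNReal.ofReal_mul (Real.exp_pos _).le, ← Real.exp_add,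
      ofReal_exp_le_lap_iff hw, add_comm]
    simp [hw]
  · simp [not_lt_top_iff.1 hw]

lemma le_rateFn [NeZero μ] {u : EuclideanSpace ℝ (Fin d)} (hu : lap μ u < ⊤)
    (v : EuclideanSpace ℝ (Fin d)) : ((⟪u, v⟫ - rlog μ u : ℝ) : EReal) ≤ rateFn μ v := by
  refine le_trans ?_ (le_iSup _ u)
  rw [logLaplace_eq, ENNReal.log_pos_real (lap_pos u).ne' hu.ne]
  norm_cast

lemma rateFn_eq_of_subgrad [NeZero μ] {u p : EuclideanSpace ℝ (Fin d)} (hu : lap μ u < ⊤)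
    (h : Subgrad μ u p) : rateFn μ p = ((⟪u, p⟫ - rlog μ u : ℝ) : EReal) := by
  refine le_antisymm ?_ (le_rateFn hu p)
  rw [rateFn_le_iff]
  intro w
  refine le_trans (le_of_eq ?_) (h w)
  rw [← ofReal_exp_rlog hu, ← ENNReal.ofReal_mul (Real.exp_pos _).le, ← Real.exp_add,
    inner_sub_left]
  congr 2; ring

lemma rateFn_nonneg [IsProbabilityMeasure μ] (v : EuclideanSpace ℝ (Fin d)) : 0 ≤ rateFn μ v := by
  have h0 : lap μ 0 = 1 := by rw [lap_zero, measure_univ]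
  have := le_rateFn (μ := μ) (u := 0) (by rw [h0]; exact ENNReal.one_lt_top) v
  simpa [rlog, h0] using this

lemma exists_coe_of_mem_edom [IsProbabilityMeasure μ] {v : EuclideanSpace ℝ (Fin d)}
    (hv : v ∈ edom (rateFn μ)) : ∃ a : ℝ, rateFn μ v = (a : EReal) := by
  have h0 := rateFn_nonneg (μ := μ) v
  have h1 : rateFn μ v < ⊤ := hv
  refine ⟨(rateFn μ v).toReal, (EReal.coe_toReal h1.ne ?_).symm⟩
  intro h; rw [h] at h0; simp at h0

/-- A rate function that is affine on a nondegenerate segment is not strictly convex. -/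
lemma StrictlyConvexOnSet.false_of_affine
    (hs : StrictlyConvexOnSet (rateFn μ) (edom (rateFn μ)))
    {p n w : EuclideanSpace ℝ (Fin d)} (hn : n ≠ 0) {a : ℝ}
    (h : ∀ t : ℝ, 0 ≤ t → rateFn μ (p + t • n) = ((⟪w, p + t • n⟫ - a : ℝ) : EReal)) : False := by
  have key : ∀ t : ℝ, (1 - t) • p + t • (p + n) = p + t • n := by intro t; module
  refine hs p (p + n) ?_ (by simpa using hn) ?_
  · intro z hz
    rw [segment_eq_image] at hz
    obtain ⟨t, ht, rfl⟩ := hz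
    simp only [key]
    change rateFn μ _ < ⊤
    rw [h t ht.1]; exact EReal.coe_lt_top _
  · intro t ht
    have h0 := h 0 le_rfl
    have h1 := h 1 zero_le_one
    simp only [zero_smul, add_zero, one_smul] at h0 h1
    rw [key, h t ht.1, h0, h1]
    norm_cast
    simp only [inner_add_right, inner_smul_right]
    ring

end Laplace

/-! ### Differentiability of `K` in the interior of its domain -/

section Gradient

variable {d : ℕ} {μ : Measure (EuclideanSpace ℝ (Fin d))}

lemma integrable_exp_of_lap_lt_top {u : EuclideanSpace ℝ (Fin d)} (hu : lap μ u < ⊤) :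
    Integrable (fun x => Real.exp ⟪u, x⟫) μ := by
  refine ⟨by fun_prop, ?_⟩
  rw [hasFiniteIntegral_iff_ofReal (ae_of_all _ fun x => (Real.exp_pos _).le)]
  exact hu

lemma toReal_lap (u : EuclideanSpace ℝ (Fin d)) :
    (lap μ u).toReal = ∫ x, Real.exp ⟪u, x⟫ ∂μ := by
  rw [integral_eq_lintegral_of_nonneg_ae (ae_of_all _ fun x => (Real.exp_pos _).le) (by fun_prop)]
  rfl

/-- Exponential of the norm is dominated by exponentials of the coordinates. -/
lemma exp_norm_le (s : ℝ) (hs : 0 ≤ s) (hd : 0 < d) (x : EuclideanSpace ℝ (Fin d)) :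
    Real.exp (s * ‖x‖) ≤ ∑ i, (Real.exp ⟪EuclideanSpace.single i (s * d), x⟫ +
      Real.exp ⟪EuclideanSpace.single i (-(s * d)), x⟫) := by
  obtain ⟨i, -, hi⟩ := Finset.exists_max_image Finset.univ (fun i => |x i|) ⟨⟨0, hd⟩, by simp⟩
  have hnorm : ‖x‖ ≤ d * |x i| := by
    have h1 : ‖x‖ ^ 2 ≤ (d * |x i|) ^ 2 := by
      rw [EuclideanSpace.norm_sq_eq]
      calc ∑ j, ‖x j‖ ^ 2 ≤ ∑ j : Fin d, |x i| ^ 2 := by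
            refine Finset.sum_le_sum fun j _ => ?_
            have := hi j (by simp)
            rw [Real.norm_eq_abs]; gcongr
        _ = d * |x i| ^ 2 := by simp
        _ ≤ (d * |x i|) ^ 2 := by
            rw [mul_pow]
            have : (1 : ℝ) ≤ d := by exact_mod_cast hd
            gcongr
            nlinarith
    exact le_of_sq_le_sq h1 (by positivity)
  have hterm : Real.exp (s * ‖x‖) ≤ Real.exp ⟪EuclideanSpace.single i (s * d), x⟫ +
      Real.exp ⟪EuclideanSpace.single i (-(s * d)), x⟫ := by
    rw [EuclideanSpace.inner_single_left, EuclideanSpace.inner_single_left]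
    simp only [conj_trivial]
    have h2 : s * ‖x‖ ≤ (s * d) * |x i| := by nlinarith
    rcases abs_cases (x i) with ⟨h, _⟩ | ⟨h, _⟩
    · rw [h] at h2
      have := Real.exp_le_exp.2 h2
      have := Real.exp_pos (-(s * d) * x i)
      linarith
    · rw [h] at h2
      have h3 : s * ‖x‖ ≤ -(s * d) * x i := by linarith
      have := Real.exp_le_exp.2 h3
      have := Real.exp_pos ((s * d) * x i)
      linarith
  exact hterm.trans (Finset.single_le_sum (f := fun i =>
    (Real.exp ⟪EuclideanSpace.single i (s * d), x⟫ +
      Real.exp ⟪EuclideanSpace.single i (-(s * d)), x⟫)) (fun j _ => by positivity)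
      (Finset.mem_univ i))

/-- Around an interior point `u` of `D(K)`, the function `exp(u·x) exp(s|x|)` is integrable for
small `s > 0`; this dominates every derivative of `exp(w·x)` for `w` near `u`. -/
lemma exists_integrable_exp_norm [IsFiniteMeasure μ] {u : EuclideanSpace ℝ (Fin d)}
    (hu : u ∈ interior (edom (logLaplace μ))) :
    ∃ s : ℝ, 0 < s ∧ Integrable (fun x => Real.exp ⟪u, x⟫ * Real.exp (s * ‖x‖)) μ := by
  rcases Nat.eq_zero_or_pos d with rfl | hd
  · refine ⟨1, one_pos, ?_⟩
    have : (fun x : EuclideanSpace ℝ (Fin 0) => Real.exp ⟪u, x⟫ * Real.exp (1 * ‖x‖)) =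
        fun _ => 1 := by
      ext x; simp [Subsingleton.elim x 0]
    rw [this]; exact integrable_const _
  rw [mem_interior_iff_mem_nhds, Metric.mem_nhds_iff] at hu
  obtain ⟨ε, hε, hball⟩ := hu
  have hd' : (0 : ℝ) < d := by exact_mod_cast hd
  refine ⟨ε / 2 / d, by positivity, ?_⟩
  have hsd : ε / 2 / d * d = ε / 2 := by field_simp
  have hinteg : ∀ (i : Fin d) (r : ℝ), |r| = ε / 2 →
      Integrable (fun x => Real.exp ⟪u + EuclideanSpace.single i r, x⟫) μ := by
    intro i r hr
    apply integrable_exp_of_lap_lt_top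
    rw [← mem_edom_iff]
    apply hball
    rw [Metric.mem_ball, dist_eq_norm]
    simp only [add_sub_cancel_left, PiLp.norm_single, Real.norm_eq_abs, hr]
    linarith
  have hbound : Integrable (fun x => ∑ i : Fin d,
      (Real.exp ⟪u + EuclideanSpace.single i (ε / 2), x⟫ +
        Real.exp ⟪u + EuclideanSpace.single i (-(ε / 2)), x⟫)) μ := by
    refine integrable_finsetSum _ fun i _ => ?_
    refine (hinteg i _ ?_).add (hinteg i _ ?_)
    · exact abs_of_pos (by positivity)
    · rw [abs_neg]; exact abs_of_pos (by positivity)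
  refine hbound.mono' (by fun_prop) (ae_of_all _ fun x => ?_)
  rw [Real.norm_eq_abs, abs_of_pos (by positivity)]
  have := exp_norm_le (d := d) (ε / 2 / d) (by positivity) hd x
  rw [hsd] at this
  calc _ ≤ _ := mul_le_mul_of_nonneg_left this (Real.exp_pos ⟪u, x⟫).le
    _ = _ := by
      rw [Finset.mul_sum]
      refine Finset.sum_congr rfl fun i _ => ?_
      rw [mul_add, ← Real.exp_add, ← Real.exp_add, inner_add_left, inner_add_left]

/-- At an interior point of `D(K)`, the function `K` is differentiable and its gradient is a
subgradient. -/
lemma exists_gradient [IsFiniteMeasure μ] [NeZero μ] {u : EuclideanSpace ℝ (Fin d)}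
    (hu : u ∈ interior (edom (logLaplace μ))) :
    ∃ p, HasGradientAt (fun w => (logLaplace μ w).toReal) p u ∧ Subgrad μ u p := by
  obtain ⟨s, hs, hinteg⟩ := exists_integrable_exp_norm hu
  have hu' : lap μ u < ⊤ := mem_edom_iff.1 (interior_subset hu)
  set F' : EuclideanSpace ℝ (Fin d) → EuclideanSpace ℝ (Fin d) →
      (EuclideanSpace ℝ (Fin d) →L[ℝ] ℝ) := fun w x => Real.exp ⟪w, x⟫ • innerSL ℝ x with hF'
  have hlin : ∀ x : EuclideanSpace ℝ (Fin d), ‖x‖ ≤ 2 / s * Real.exp (s / 2 * ‖x‖) := by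
    intro x
    have h := Real.add_one_le_exp (s / 2 * ‖x‖)
    have h1 : s / 2 * ‖x‖ ≤ Real.exp (s / 2 * ‖x‖) := by linarith
    calc ‖x‖ = 2 / s * (s / 2 * ‖x‖) := by field_simp
      _ ≤ _ := by gcongr
  have hbd : ∀ x : EuclideanSpace ℝ (Fin d), ∀ w ∈ Metric.ball u (s / 2),
      ‖F' w x‖ ≤ 2 / s * (Real.exp ⟪u, x⟫ * Real.exp (s * ‖x‖)) := by
    intro x w hw
    rw [hF']
    simp only [norm_smul, innerSL_apply_norm, Real.norm_eq_abs, abs_of_pos (Real.exp_pos _)]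
    have h1 : ⟪w, x⟫ ≤ ⟪u, x⟫ + s / 2 * ‖x‖ := by
      have : ⟪w, x⟫ = ⟪u, x⟫ + ⟪w - u, x⟫ := by rw [inner_sub_left]; ring
      rw [this]
      have h2 := real_inner_le_norm (w - u) x
      rw [Metric.mem_ball, dist_eq_norm] at hw
      nlinarith [norm_nonneg x]
    calc Real.exp ⟪w, x⟫ * ‖x‖
        ≤ Real.exp (⟪u, x⟫ + s / 2 * ‖x‖) * (2 / s * Real.exp (s / 2 * ‖x‖)) := by
          gcongr
          exact hlin x
      _ = 2 / s * (Real.exp ⟪u, x⟫ * Real.exp (s * ‖x‖)) := by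
          have : s * ‖x‖ = s / 2 * ‖x‖ + s / 2 * ‖x‖ := by ring
          rw [this, Real.exp_add, Real.exp_add]; ring
  have hbi := hinteg.const_mul (2 / s)
  have hmeas : AEStronglyMeasurable (F' u) μ := by
    have : Continuous (F' u) := by
      rw [hF']
      have h1 : Continuous fun x : EuclideanSpace ℝ (Fin d) => innerSL ℝ x := (innerSL ℝ).continuous
      fun_prop
    exact this.aestronglyMeasurable
  have hF'i : Integrable (F' u) μ :=
    hbi.mono' hmeas (ae_of_all _ fun x => hbd x u (Metric.mem_ball_self (by positivity)))
  have hderiv : HasFDerivAt (fun w => ∫ x, Real.exp ⟪w, x⟫ ∂μ) (∫ x, F' u x ∂μ) u := by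
    refine hasFDerivAt_integral_of_dominated_of_fderiv_le
      (bound := fun x => 2 / s * (Real.exp ⟪u, x⟫ * Real.exp (s * ‖x‖)))
      (Metric.ball_mem_nhds u (by positivity : 0 < s / 2)) ?_ ?_ hmeas
      (ae_of_all _ hbd) hbi ?_
    · exact Eventually.of_forall fun w => by fun_prop
    · exact integrable_exp_of_lap_lt_top hu'
    · refine ae_of_all _ fun x w _ => ?_
      have h1 : HasFDerivAt (fun w : EuclideanSpace ℝ (Fin d) => ⟪w, x⟫) (innerSL ℝ x) w := by
        have := (innerSL ℝ x).hasFDerivAt (x := w)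
        refine this.congr_of_eventuallyEq (Eventually.of_forall fun y => ?_)
        simp [real_inner_comm]
      exact h1.exp
  have hM : 0 < ∫ x, Real.exp ⟪u, x⟫ ∂μ := by
    rw [← toReal_lap]; exact ENNReal.toReal_pos (lap_pos u).ne' hu'.ne
  have hlog := hderiv.log hM.ne'
  set M := ∫ x, Real.exp ⟪u, x⟫ ∂μ with hMdef
  set p := (InnerProductSpace.toDual ℝ (EuclideanSpace ℝ (Fin d))).symm (M⁻¹ • ∫ x, F' u x ∂μ)
    with hp
  have hpin : ∀ y, ⟪p, y⟫ = M⁻¹ * ∫ x, Real.exp ⟪u, x⟫ * ⟪x, y⟫ ∂μ := by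
    intro y
    rw [hp, InnerProductSpace.toDual_symm_apply, smul_apply,
      ContinuousLinearMap.integral_apply hF'i, smul_eq_mul]
    simp [hF']
  refine ⟨p, ?_, ?_⟩
  · rw [hasGradientAt_iff_hasFDerivAt, hp, LinearIsometryEquiv.apply_symm_apply]
    refine hlog.congr_of_eventuallyEq (Eventually.of_forall fun w => ?_)
    simp only [toReal_logLaplace, rlog, toReal_lap]
  · intro w
    by_cases hw : lap μ w < ⊤
    swap
    · rw [not_lt_top_iff.1 hw]; exact le_top
    set m := ⟪w - u, p⟫ with hm
    rw [← ENNReal.ofReal_toReal hu'.ne, ← ENNReal.ofReal_toReal hw.ne,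
      ← ENNReal.ofReal_mul (Real.exp_pos _).le, toReal_lap, toReal_lap, ← hMdef]
    refine ENNReal.ofReal_le_ofReal ?_
    have hI1 := integrable_exp_of_lap_lt_top hu'
    have hI2 : Integrable (fun x => Real.exp ⟪u, x⟫ * ⟪x, w - u⟫) μ := by
      have := hF'i.apply_continuousLinearMap (w - u)
      simpa [hF'] using this
    -- the tangent line of `exp` at the tilted mean `m`, integrated against the tilted measure
    have hmono : ∫ x, Real.exp m * (Real.exp ⟪u, x⟫ * (1 - m) + Real.exp ⟪u, x⟫ * ⟪x, w - u⟫) ∂μ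
        ≤ ∫ x, Real.exp ⟪w, x⟫ ∂μ := by
      refine integral_mono (((hI1.mul_const _).add hI2).const_mul _)
        (integrable_exp_of_lap_lt_top hw) fun x => ?_
      have h1 : ⟪w, x⟫ = m + ⟪u, x⟫ + (⟪x, w - u⟫ - m) := by
        rw [inner_sub_right, real_inner_comm w x, real_inner_comm u x]; ring
      have h2 := Real.add_one_le_exp (⟪x, w - u⟫ - m)
      rw [h1, Real.exp_add, Real.exp_add]
      have h3 : 0 < Real.exp m * Real.exp ⟪u, x⟫ := by positivity
      nlinarith
    rw [integral_const_mul, integral_add (hI1.mul_const _) hI2, integral_mul_const, ← hMdef] at hmono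
    have hm' : ∫ x, Real.exp ⟪u, x⟫ * ⟪x, w - u⟫ ∂μ = M * m := by
      rw [hm, real_inner_comm, hpin]; field_simp
    rw [hm'] at hmono
    calc _ = _ := by ring
      _ ≤ _ := hmono

lemma subgrad_unique [NeZero μ] {u p q : EuclideanSpace ℝ (Fin d)}
    (hu : u ∈ interior (edom (logLaplace μ)))
    (hp : HasGradientAt (fun w => (logLaplace μ w).toReal) p u) (hq : Subgrad μ u q) :
    q = p := by
  have hu' : lap μ u < ⊤ := mem_edom_iff.1 (interior_subset hu)
  rw [subgrad_iff hu'] at hq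
  have hmin : IsLocalMin (fun w => (logLaplace μ w).toReal - innerSL ℝ q w) u := by
    filter_upwards [mem_interior_iff_mem_nhds.1 hu] with w hw
    have := hq w (mem_edom_iff.1 hw)
    simp only [toReal_logLaplace, innerSL_apply_apply]
    rw [inner_sub_left, ← real_inner_comm w q, ← real_inner_comm u q] at this
    linarith
  have hd := (hasGradientAt_iff_hasFDerivAt.1 hp).sub (innerSL ℝ q).hasFDerivAt
  have h0 := hmin.hasFDerivAt_eq_zero hd
  have h1 : ∀ y, ⟪p, y⟫ = ⟪q, y⟫ := by
    intro y
    have := DFunLike.congr_fun h0 y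
    simp at this
    linarith
  exact (ext_inner_right ℝ h1).symm

end Gradient

/-! ### Strict convexity, steepness and the domains of `K` and `I` -/

section Steepness

variable {d : ℕ} {μ : Measure (EuclideanSpace ℝ (Fin d))}

/-- A nonzero outer normal to an open convex set at a point outside of it. -/
lemma exists_normal {G : Set (EuclideanSpace ℝ (Fin d))} (hG : Convex ℝ G) (hGo : IsOpen G)
    (hne : G.Nonempty) {b : EuclideanSpace ℝ (Fin d)} (hb : b ∉ G) :
    ∃ n : EuclideanSpace ℝ (Fin d), n ≠ 0 ∧ ∀ u ∈ closure G, ⟪n, u⟫ ≤ ⟪n, b⟫ := by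
  obtain ⟨f, hf⟩ := geometric_hahn_banach_open_point hG hGo hb
  set n := (InnerProductSpace.toDual ℝ (EuclideanSpace ℝ (Fin d))).symm f with hn
  have hfn : ∀ y, f y = ⟪n, y⟫ := fun y => by rw [hn, InnerProductSpace.toDual_symm_apply]
  refine ⟨n, ?_, fun u hu => ?_⟩
  · rintro h0
    obtain ⟨g, hg⟩ := hne
    have := hf g hg
    simp [hfn, h0] at this
  · have hcl : IsClosed {u : EuclideanSpace ℝ (Fin d) | ⟪n, u⟫ ≤ ⟪n, b⟫} :=
      isClosed_le (by fun_prop) continuous_const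
    refine closure_minimal (fun g hg => ?_) hcl hu
    have := hf g hg
    rw [hfn, hfn] at this
    exact this.le

lemma subset_closure_interior_edom (hne : (interior (edom (logLaplace μ))).Nonempty) :
    edom (logLaplace μ) ⊆ closure (interior (edom (logLaplace μ))) := by
  rw [convex_edom.closure_interior_eq_closure_of_nonempty_interior hne]
  exact subset_closure

/-- If `K` has a subgradient at a boundary point of `D(K)`, then adding to it the multiples of an
outer normal produces a ray on which the rate function is affine; strict convexity excludes this. -/
lemma mem_interior_of_strict [IsProbabilityMeasure μ]
    (hs : StrictlyConvexOnSet (rateFn μ) (edom (rateFn μ)))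
    (hne : (interior (edom (logLaplace μ))).Nonempty) {u p : EuclideanSpace ℝ (Fin d)}
    (hu : lap μ u < ⊤) (hp : Subgrad μ u p) : u ∈ interior (edom (logLaplace μ)) := by
  by_contra hcon
  obtain ⟨n, hn0, hn⟩ := exists_normal convex_edom.interior isOpen_interior hne hcon
  refine hs.false_of_affine (p := p) (n := n) (w := u) (a := rlog μ u) hn0 fun t ht => ?_
  refine rateFn_eq_of_subgrad hu ?_
  rw [subgrad_iff hu] at hp ⊢
  intro w hw
  have h1 := hp w hw
  have h2 := hn w (subset_closure_interior_edom hne (mem_edom_iff.2 hw))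
  rw [inner_add_right, inner_smul_right, inner_sub_left w u n, real_inner_comm n w,
    real_inner_comm n u]
  nlinarith

/-- If steepness fails at `u₀`, a limit of bounded gradients along the sequence is a subgradient of
`K` at the boundary point `u₀`. -/
lemma steep_of_strict [IsProbabilityMeasure μ]
    (hs : StrictlyConvexOnSet (rateFn μ) (edom (rateFn μ)))
    (hne : (interior (edom (logLaplace μ))).Nonempty) : Steep μ := by
  intro u u₀ hu hlim hfr
  by_contra hcon
  set g := fun n => gradient (fun w => (logLaplace μ w).toReal) (u n) with hg
  have hsub : ∀ n, Subgrad μ (u n) (g n) := by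
    intro n
    obtain ⟨p, hp, hp'⟩ := exists_gradient (hu n)
    rw [hg]; simp only [hp.gradient]; exact hp'
  rw [tendsto_atTop] at hcon
  push Not at hcon
  obtain ⟨B, hB⟩ := hcon
  obtain ⟨p, -, φ, hφ, hpφ⟩ := tendsto_subseq_of_frequently_bounded
    (x := g) (Metric.isBounded_closedBall (x := 0) (r := B)) (by
      refine hB.mono fun n hn => ?_
      rw [mem_closedBall_zero_iff]
      exact hn.le)
  have hlimφ : Tendsto (u ∘ φ) atTop (𝓝 u₀) := hlim.comp hφ.tendsto_atTop
  -- the subgradient inequalities pass to the limit by lower semicontinuity of `M`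
  have hbound : ∀ w, lap μ w < ⊤ →
      lap μ u₀ ≤ ENNReal.ofReal (Real.exp (-⟪w - u₀, p⟫)) * lap μ w := by
    intro w hw
    have h1 : ∀ n, lap μ (u (φ n)) ≤
        ENNReal.ofReal (Real.exp (-⟪w - u (φ n), g (φ n)⟫)) * lap μ w := by
      intro n
      have := mul_le_mul_right (hsub (φ n) w)
        (ENNReal.ofReal (Real.exp (-⟪w - u (φ n), g (φ n)⟫)))
      rwa [← mul_assoc, ← ENNReal.ofReal_mul (Real.exp_pos _).le, ← Real.exp_add,
        neg_add_cancel, Real.exp_zero, ENNReal.ofReal_one, one_mul] at this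
    have h2 : Tendsto (fun n => ENNReal.ofReal (Real.exp (-⟪w - u (φ n), g (φ n)⟫)) * lap μ w)
        atTop (𝓝 (ENNReal.ofReal (Real.exp (-⟪w - u₀, p⟫)) * lap μ w)) := by
      refine ENNReal.Tendsto.mul_const ?_ (Or.inr hw.ne)
      refine (ENNReal.continuous_ofReal.tendsto _).comp ?_
      refine (Real.continuous_exp.tendsto _).comp ?_
      exact ((tendsto_const_nhds.sub hlimφ).inner hpφ).neg
    refine le_of_forall_lt fun c hc => ?_
    by_contra hc'
    push Not at hc'
    obtain ⟨c', hc'1, hc'2⟩ := exists_between hc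
    have h3 := hlimφ.eventually (lowerSemicontinuous_lap u₀ c' hc'2)
    have h4 := h2.eventually (gt_mem_nhds (hc'.trans_lt hc'1))
    obtain ⟨n, hn3, hn4⟩ := (h3.and h4).exists
    exact absurd (lt_of_lt_of_le hn3 (h1 n)) (not_lt.2 hn4.le)
  have h0 : lap μ u₀ < ⊤ := by
    have h1 : lap μ 0 < ⊤ := mem_edom_iff.1 zero_mem_edom
    exact (hbound 0 h1).trans_lt (ENNReal.mul_lt_top ENNReal.ofReal_lt_top h1)
  refine hfr.2 (mem_interior_of_strict hs hne h0 (p := p) fun w => ?_)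
  by_cases hw : lap μ w < ⊤
  · have := mul_le_mul_right (hbound w hw) (ENNReal.ofReal (Real.exp (⟪w - u₀, p⟫)))
    rwa [← mul_assoc, ← ENNReal.ofReal_mul (Real.exp_pos _).le, ← Real.exp_add,
        add_neg_cancel, Real.exp_zero, ENNReal.ofReal_one, one_mul] at this
  · rw [not_lt_top_iff.1 hw]; exact le_top

/-- Steepness excludes subgradients of `K` at boundary points of `D(K)`: approaching such a point
along a segment from an interior point, the gradients of `K` would stay bounded. -/
lemma mem_interior_of_steep [IsProbabilityMeasure μ] (hs : Steep μ)
    (hne : (interior (edom (logLaplace μ))).Nonempty) {u x : EuclideanSpace ℝ (Fin d)}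
    (hu : lap μ u < ⊤) (hx : Subgrad μ u x) : u ∈ interior (edom (logLaplace μ)) := by
  by_contra hcon
  obtain ⟨u₀, hu₀⟩ := hne
  obtain ⟨r, hr, hball⟩ := Metric.nhds_basis_closedBall.mem_iff.1
    (isOpen_interior.mem_nhds hu₀)
  have hcont : ContinuousOn (rlog μ) (Metric.closedBall u₀ r) := by
    intro w hw
    obtain ⟨p, hp, -⟩ := exists_gradient (hball hw)
    have := hp.differentiableAt.continuousAt
    simp only [toReal_logLaplace] at this
    exact this.continuousWithinAt
  obtain ⟨B, hB⟩ := (isCompact_closedBall u₀ r).bddAbove_image hcont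
  set s : ℕ → ℝ := fun n => 1 / ((n : ℝ) + 1) with hsdef
  have hs0 : ∀ n, 0 < s n := fun n => by rw [hsdef]; positivity
  have hs1 : ∀ n, s n ≤ 1 := fun n => by
    rw [hsdef]; simp only; rw [div_le_one (by positivity)]; linarith [n.cast_nonneg (α := ℝ)]
  have hslim : Tendsto s atTop (𝓝 0) := tendsto_one_div_add_atTop_nhds_zero_nat
  set U : ℕ → EuclideanSpace ℝ (Fin d) := fun n => s n • u₀ + (1 - s n) • u with hU
  have hUint : ∀ n, U n ∈ interior (edom (logLaplace μ)) := fun n =>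
    convex_edom.combo_interior_self_mem_interior hu₀ (mem_edom_iff.2 hu) (hs0 n)
      (by linarith [hs1 n]) (by ring)
  have hUlim : Tendsto U atTop (𝓝 u) := by
    have : Tendsto U atTop (𝓝 ((0 : ℝ) • u₀ + (1 - (0 : ℝ)) • u)) :=
      (hslim.smul_const u₀).add ((tendsto_const_nhds.sub hslim).smul_const u)
    simpa using this
  have hfr : u ∈ frontier (edom (logLaplace μ)) :=
    ⟨subset_closure (mem_edom_iff.2 hu), hcon⟩
  have hsteep := hs U u hUint hUlim hfr
  set C := (B - rlog μ u - ⟪u₀ - u, x⟫) / r with hC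
  obtain ⟨n, hn⟩ := (hsteep.eventually_gt_atTop (max C 0)).exists
  obtain ⟨p, hp, hsub⟩ := exists_gradient (hUint n)
  rw [hp.gradient, max_lt_iff] at hn
  have hUn : lap μ (U n) < ⊤ := mem_edom_iff.1 (interior_subset (hUint n))
  rw [subgrad_iff hUn] at hsub
  rw [subgrad_iff hu] at hx
  set q := u₀ + (r / ‖p‖) • p with hq
  have hqball : q ∈ Metric.closedBall u₀ r := by
    rw [Metric.mem_closedBall, dist_eq_norm, hq, add_sub_cancel_left, norm_smul, Real.norm_eq_abs,
      abs_of_pos (div_pos hr hn.2), div_mul_cancel₀ _ hn.2.ne']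
  have h1 := hsub q (mem_edom_iff.1 (interior_subset (hball hqball)))
  have h2 := hsub u hu
  have h3 := hx (U n) hUn
  have h4 : rlog μ q ≤ B := hB (mem_image_of_mem _ hqball)
  have e1 : q - U n = (1 - s n) • (u₀ - u) + (r / ‖p‖) • p := by
    rw [hq, hU]; simp only; module
  have e2 : u - U n = -(s n • (u₀ - u)) := by rw [hU]; simp only; module
  have e3 : U n - u = s n • (u₀ - u) := by rw [hU]; simp only; module
  rw [e1, inner_add_left, real_inner_smul_left, real_inner_smul_left,
    real_inner_self_eq_norm_sq] at h1
  rw [e2, inner_neg_left, real_inner_smul_left] at h2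
  rw [e3, real_inner_smul_left] at h3
  have e4 : r / ‖p‖ * ‖p‖ ^ 2 = r * ‖p‖ := by have := hn.2.ne'; field_simp
  rw [e4] at h1
  have h5 : ⟪u₀ - u, x⟫ ≤ ⟪u₀ - u, p⟫ := by
    have : s n * ⟪u₀ - u, x⟫ ≤ s n * ⟪u₀ - u, p⟫ := by linarith
    exact le_of_mul_le_mul_left this (hs0 n)
  have h6 : (1 - s n) * ⟪u₀ - u, x⟫ ≤ (1 - s n) * ⟪u₀ - u, p⟫ :=
    mul_le_mul_of_nonneg_left h5 (by linarith [hs1 n])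
  have h7 : r * ‖p‖ ≤ B - rlog μ u - ⟪u₀ - u, x⟫ := by linarith
  have h8 : ‖p‖ ≤ C := by rw [hC, le_div_iff₀ hr]; linarith
  linarith [hn.1]

end Steepness

section Domain

variable {d : ℕ} {μ : Measure (EuclideanSpace ℝ (Fin d))}

/-- The mean of `X` conditioned on a large ball lies in `D(I_X)`. -/
lemma edom_rateFn_nonempty [IsProbabilityMeasure μ] : (edom (rateFn μ)).Nonempty := by
  obtain ⟨R, hR⟩ : ∃ R : ℕ, μ (Metric.closedBall 0 R) ≠ 0 := by
    by_contra! h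
    have h1 : μ (⋃ n : ℕ, Metric.closedBall 0 (n : ℝ)) = 0 := measure_iUnion_null h
    rw [Metric.iUnion_closedBall_nat] at h1
    simp at h1
  set ρ := μ.restrict (Metric.closedBall 0 (R : ℝ)) with hρ
  have : NeZero ρ := ⟨by rw [hρ, Ne, Measure.restrict_eq_zero]; exact hR⟩
  have hdom : edom (logLaplace ρ) = univ := by
    refine eq_univ_of_forall fun u => mem_edom_iff.2 ?_
    refine lt_of_le_of_lt (setLIntegral_mono' (g := fun _ => ENNReal.ofReal (Real.exp (‖u‖ * R)))
      Metric.isClosed_closedBall.measurableSet fun x hx => ?_) ?_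
    · refine ENNReal.ofReal_le_ofReal (Real.exp_le_exp.2 ((real_inner_le_norm _ _).trans ?_))
      rw [mem_closedBall_zero_iff] at hx
      gcongr
    · rw [lintegral_const]
      exact ENNReal.mul_lt_top ENNReal.ofReal_lt_top (measure_lt_top _ _)
  obtain ⟨p, -, hp⟩ := exists_gradient (μ := ρ) (u := 0) (by rw [hdom]; simp)
  have hl0 : lap ρ 0 < ⊤ := mem_edom_iff.1 zero_mem_edom
  refine ⟨p, lt_of_le_of_lt ((rateFn_le_iff p (-rlog ρ 0)).2 fun w => ?_) (EReal.coe_lt_top _)⟩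
  refine le_trans ?_ (lap_mono (ν := ρ) Measure.restrict_le_self w)
  refine le_trans (le_of_eq ?_) (hp w)
  rw [← ofReal_exp_rlog hl0, ← ENNReal.ofReal_mul (Real.exp_pos _).le, ← Real.exp_add]
  simp

/-- If `D(K)` has empty interior it lies in a hyperplane through `0`, and the rate function is
constant along the normal of that hyperplane. -/
lemma interior_nonempty_of_strict [IsProbabilityMeasure μ]
    (hs : StrictlyConvexOnSet (rateFn μ) (edom (rateFn μ))) :
    (interior (edom (logLaplace μ))).Nonempty := by
  by_contra hcon
  rw [convex_edom.interior_nonempty_iff_affineSpan_eq_top] at hcon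
  have hspan : Submodule.span ℝ (edom (logLaplace μ)) ≠ ⊤ := by
    intro h
    apply hcon
    have h0 : (0 : EuclideanSpace ℝ (Fin d)) ∈ affineSpan ℝ (edom (logLaplace μ)) :=
      subset_affineSpan _ _ zero_mem_edom
    have := affineSpan_insert_zero (k := ℝ) (edom (logLaplace μ))
    rw [insert_eq_of_mem zero_mem_edom, h] at this
    exact SetLike.coe_injective (by rw [this]; rfl)
  have hort : (Submodule.span ℝ (edom (logLaplace μ)))ᗮ ≠ ⊥ := by
    rwa [Ne, Submodule.orthogonal_eq_bot_iff]
  obtain ⟨n, hn, hn0⟩ := Submodule.exists_mem_ne_zero_of_ne_bot hort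
  obtain ⟨v, hv⟩ := edom_rateFn_nonempty (μ := μ)
  obtain ⟨a, ha⟩ := exists_coe_of_mem_edom hv
  refine hs.false_of_affine (p := v) (n := n) (w := 0) (a := -a) hn0 fun t _ => ?_
  simp only [inner_zero_left, zero_sub, neg_neg]
  rw [← ha]
  have key : ∀ b : ℝ, rateFn μ (v + t • n) ≤ (b : EReal) ↔ a ≤ b := by
    intro b
    rw [← EReal.coe_le_coe_iff, ← ha, rateFn_le_iff, rateFn_le_iff]
    refine forall_congr' fun u => ?_
    by_cases hu : lap μ u < ⊤
    · have : ⟪u, n⟫ = 0 :=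
        (Submodule.mem_orthogonal _ n).1 hn u (Submodule.subset_span (mem_edom_iff.2 hu))
      rw [inner_add_right, inner_smul_right, this, mul_zero, add_zero]
    · rw [not_lt_top_iff.1 hu]; simp
  rw [eq_coe_of_forall_le_iff key, ha]

/-- `D(I_X)` lies in every closed half-space carrying `X`. -/
lemma inner_le_of_mem_edom [IsProbabilityMeasure μ] {ℓ : EuclideanSpace ℝ (Fin d)} {c : ℝ}
    (h : ∀ᵐ x ∂μ, ⟪ℓ, x⟫ ≤ c) {z : EuclideanSpace ℝ (Fin d)} (hz : z ∈ edom (rateFn μ)) :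
    ⟪ℓ, z⟫ ≤ c := by
  obtain ⟨a, ha⟩ := exists_coe_of_mem_edom hz
  have hle := (rateFn_le_iff z a).1 ha.le
  have key : ∀ t : ℝ, 0 ≤ t → t * ⟪ℓ, z⟫ - a ≤ t * c := by
    intro t ht
    have h1 : lap μ (t • ℓ) ≤ ENNReal.ofReal (Real.exp (t * c)) := by
      calc lap μ (t • ℓ) ≤ ∫⁻ _, ENNReal.ofReal (Real.exp (t * c)) ∂μ := by
            refine lintegral_mono_ae (h.mono fun x hx => ?_)
            refine ENNReal.ofReal_le_ofReal (Real.exp_le_exp.2 ?_)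
            rw [real_inner_smul_left]; gcongr
        _ = _ := by simp
    have h2 := (hle (t • ℓ)).trans h1
    rw [ENNReal.ofReal_le_ofReal_iff (Real.exp_pos _).le, Real.exp_le_exp,
      real_inner_smul_left] at h2
    exact h2
  by_contra hcon
  push Not at hcon
  have hpos : 0 < ⟪ℓ, z⟫ - c := by linarith
  have := key ((|a| + 1) / (⟪ℓ, z⟫ - c)) (by positivity)
  have e : (|a| + 1) / (⟪ℓ, z⟫ - c) * (⟪ℓ, z⟫ - c) = |a| + 1 := by field_simp
  have := le_abs_self a
  linarith

end Domain

/-! ### Conditioning on a supporting hyperplane -/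

section Hyperplane

variable {d : ℕ} {μ : Measure (EuclideanSpace ℝ (Fin d))}

/-- The cylinder `int D(K) + ℝℓ`. -/
def cyl {d : ℕ} (μ : Measure (EuclideanSpace ℝ (Fin d))) (ℓ : EuclideanSpace ℝ (Fin d)) :
    Set (EuclideanSpace ℝ (Fin d)) :=
  {u | ∃ t : ℝ, u + t • ℓ ∈ interior (edom (logLaplace μ))}

lemma interior_subset_cyl (ℓ : EuclideanSpace ℝ (Fin d)) :
    interior (edom (logLaplace μ)) ⊆ cyl μ ℓ := fun u hu => ⟨0, by simpa using hu⟩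

lemma isOpen_cyl (ℓ : EuclideanSpace ℝ (Fin d)) : IsOpen (cyl μ ℓ) := by
  have : cyl μ ℓ = ⋃ t : ℝ, (fun u => u + t • ℓ) ⁻¹' interior (edom (logLaplace μ)) := by
    ext u; simp [cyl]
  rw [this]
  exact isOpen_iUnion fun t => isOpen_interior.preimage (by fun_prop)

lemma convex_cyl (ℓ : EuclideanSpace ℝ (Fin d)) : Convex ℝ (cyl μ ℓ) := by
  rintro u ⟨s, hs⟩ w ⟨t, ht⟩ a b ha hb hab
  refine ⟨a * s + b * t, ?_⟩
  have := convex_edom.interior hs ht ha hb hab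
  convert this using 1
  module

lemma measurableSet_hyp (ℓ : EuclideanSpace ℝ (Fin d)) (c : ℝ) : MeasurableSet (hyp ℓ c) :=
  (isClosed_eq (by fun_prop) continuous_const : IsClosed {v | ⟪ℓ, v⟫ = c}).measurableSet

lemma lap_restrict_eq [IsFiniteMeasure μ] {L : Set (EuclideanSpace ℝ (Fin d))} (h : μ L ≠ 0)
    (u : EuclideanSpace ℝ (Fin d)) :
    lap (μ.restrict L) u = μ L * lap (μ[|L]) u := by
  unfold lap ProbabilityTheory.cond
  rw [lintegral_smul_measure, smul_eq_mul, ← mul_assoc,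
    ENNReal.mul_inv_cancel h (measure_ne_top _ _), one_mul]

/-- Translating along the normal of a hyperplane carrying `ν`. -/
lemma lap_add_smul {ν : Measure (EuclideanSpace ℝ (Fin d))} {ℓ : EuclideanSpace ℝ (Fin d)} {c : ℝ}
    (h : ∀ᵐ x ∂ν, ⟪ℓ, x⟫ = c) (u : EuclideanSpace ℝ (Fin d)) (t : ℝ) :
    lap ν (u + t • ℓ) = ENNReal.ofReal (Real.exp (t * c)) * lap ν u := by
  unfold lap
  rw [← lintegral_const_mul _ (measurable_expInner u)]
  refine lintegral_congr_ae (h.mono fun x hx => ?_)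
  simp only
  rw [← ENNReal.ofReal_mul (Real.exp_pos _).le, ← Real.exp_add, inner_add_left,
    real_inner_smul_left, hx, add_comm]

lemma ae_restrict_hyp (ℓ : EuclideanSpace ℝ (Fin d)) (c : ℝ) :
    ∀ᵐ x ∂(μ.restrict (hyp ℓ c)), ⟪ℓ, x⟫ = c :=
  ae_restrict_mem (measurableSet_hyp ℓ c)

lemma ae_cond_hyp (ℓ : EuclideanSpace ℝ (Fin d)) (c : ℝ) :
    ∀ᵐ x ∂(μ[|hyp ℓ c]), ⟪ℓ, x⟫ = c :=
  Measure.ae_smul_measure (ae_restrict_hyp ℓ c) _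

/-- If `X` lies in the half-space `ℓ·x ≤ c`, then on the hyperplane `L = {ℓ·x = c}` the bound
`exp(u·v - a) ≤ E exp(u·X)` improves to `exp(u·v - a) ≤ E[exp(u·X); X ∈ L]`: apply the former
at `u + nℓ` and let `n → ∞`. -/
lemma exp_le_lap_restrict_of_dom {ℓ v u : EuclideanSpace ℝ (Fin d)} {c a : ℝ}
    (hμ : ∀ᵐ x ∂μ, ⟪ℓ, x⟫ ≤ c) (hv : ⟪ℓ, v⟫ = c) (ha : rateFn μ v ≤ (a : EReal))
    (hu : lap μ u < ⊤) :
    ENNReal.ofReal (Real.exp (⟪u, v⟫ - a)) ≤ lap (μ.restrict (hyp ℓ c)) u := by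
  rw [rateFn_le_iff] at ha
  set F : ℕ → EuclideanSpace ℝ (Fin d) → ℝ≥0∞ := fun n x =>
    ENNReal.ofReal (Real.exp (⟪u, x⟫ + n * (⟪ℓ, x⟫ - c))) with hF
  have hlim : Tendsto (fun n => ∫⁻ x, F n x ∂μ) atTop
      (𝓝 (∫⁻ x, (hyp ℓ c).indicator (fun x => ENNReal.ofReal (Real.exp ⟪u, x⟫)) x ∂μ)) := by
    refine tendsto_lintegral_of_dominated_convergence
      (fun x => ENNReal.ofReal (Real.exp ⟪u, x⟫)) (fun n => ?_) (fun n => ?_) hu.ne ?_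
    · rw [hF]; fun_prop
    · refine hμ.mono fun x hx => ENNReal.ofReal_le_ofReal (Real.exp_le_exp.2 ?_)
      have : (n : ℝ) * (⟪ℓ, x⟫ - c) ≤ 0 :=
        mul_nonpos_of_nonneg_of_nonpos n.cast_nonneg (by linarith)
      linarith
    · refine hμ.mono fun x hx => ?_
      by_cases hxc : ⟪ℓ, x⟫ = c
      · have : x ∈ hyp ℓ c := hxc
        simp [hF, hxc, this]
      · have hn : x ∉ hyp ℓ c := hxc
        rw [indicator_of_notMem hn, ← ENNReal.ofReal_zero]
        refine (ENNReal.continuous_ofReal.tendsto 0).comp (Real.tendsto_exp_atBot.comp ?_)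
        refine tendsto_atBot_add_const_left _ _ ?_
        exact tendsto_natCast_atTop_atTop.atTop_mul_const_of_neg
          (by linarith [lt_of_le_of_ne hx hxc])
  rw [lintegral_indicator (measurableSet_hyp ℓ c)] at hlim
  refine ge_of_tendsto' hlim fun n => ?_
  have h1 := ha (u + (n : ℝ) • ℓ)
  have h2 : ∫⁻ x, F n x ∂μ = ENNReal.ofReal (Real.exp (-(n * c))) * lap μ (u + (n : ℝ) • ℓ) := by
    unfold lap
    rw [← lintegral_const_mul _ (measurable_expInner _)]
    refine lintegral_congr fun x => ?_
    rw [hF, ← ENNReal.ofReal_mul (Real.exp_pos _).le, ← Real.exp_add, inner_add_left,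
      real_inner_smul_left]
    ring_nf
  rw [h2]
  refine le_trans (le_of_eq ?_) (mul_le_mul_right h1 _)
  rw [← ENNReal.ofReal_mul (Real.exp_pos _).le, ← Real.exp_add, inner_add_left,
      real_inner_smul_left, hv]
  congr 2; ring

/-- A hyperplane meeting `D(I)` and bounding the half-space carrying `X` is charged by `X`. -/
lemma measure_hyp_pos [IsProbabilityMeasure μ] {ℓ v : EuclideanSpace ℝ (Fin d)} {c : ℝ}
    (hμ : ∀ᵐ x ∂μ, ⟪ℓ, x⟫ ≤ c) (hv : ⟪ℓ, v⟫ = c) (hvd : v ∈ edom (rateFn μ)) :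
    0 < μ (hyp ℓ c) := by
  obtain ⟨a, ha⟩ := exists_coe_of_mem_edom hvd
  have := exp_le_lap_restrict_of_dom hμ hv ha.le (mem_edom_iff.1 zero_mem_edom)
  rw [lap_zero, Measure.restrict_apply_univ] at this
  exact lt_of_lt_of_le (ENNReal.ofReal_pos.2 (Real.exp_pos _)) this

/-- The improved bound extends to the closure of the cylinder `int D(K) + ℝℓ`: it is invariant
under translation by `ℓ`, and passes to the boundary along segments by convexity of `M`. -/
lemma exp_le_lap_restrict {ℓ v : EuclideanSpace ℝ (Fin d)} {c a : ℝ}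
    (hne : (interior (edom (logLaplace μ))).Nonempty)
    (hμ : ∀ᵐ x ∂μ, ⟪ℓ, x⟫ ≤ c) (hv : ⟪ℓ, v⟫ = c) (ha : rateFn μ v ≤ (a : EReal))
    {w : EuclideanSpace ℝ (Fin d)} (hw : w ∈ closure (cyl μ ℓ)) :
    ENNReal.ofReal (Real.exp (⟪w, v⟫ - a)) ≤ lap (μ.restrict (hyp ℓ c)) w := by
  have hcyl : ∀ u ∈ cyl μ ℓ,
      ENNReal.ofReal (Real.exp (⟪u, v⟫ - a)) ≤ lap (μ.restrict (hyp ℓ c)) u := by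
    rintro u ⟨t, ht⟩
    have h1 := exp_le_lap_restrict_of_dom hμ hv ha (mem_edom_iff.1 (interior_subset ht))
    rw [lap_add_smul (ae_restrict_hyp ℓ c)] at h1
    have h2 : Real.exp (⟪u + t • ℓ, v⟫ - a) = Real.exp (t * c) * Real.exp (⟪u, v⟫ - a) := by
      rw [← Real.exp_add, inner_add_left, real_inner_smul_left, hv]; congr 1; ring
    rw [h2, ENNReal.ofReal_mul (Real.exp_pos _).le] at h1
    exact (ENNReal.mul_le_mul_iff_right (by simp [Real.exp_pos]) ENNReal.ofReal_ne_top).1 h1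
  by_cases hwt : lap (μ.restrict (hyp ℓ c)) w = ⊤
  · rw [hwt]; exact le_top
  obtain ⟨u₀, hu₀⟩ := hne
  have hu₀t : lap (μ.restrict (hyp ℓ c)) u₀ ≠ ⊤ :=
    ((lap_mono Measure.restrict_le_self u₀).trans_lt
      (mem_edom_iff.1 (interior_subset hu₀))).ne
  set s : ℕ → ℝ := fun n => 1 / ((n : ℝ) + 1) with hsdef
  have hs0 : ∀ n, 0 < s n := fun n => by rw [hsdef]; positivity
  have hs1 : ∀ n, s n ≤ 1 := fun n => by
    rw [hsdef]; simp only; rw [div_le_one (by positivity)]; linarith [n.cast_nonneg (α := ℝ)]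
  have hslim : Tendsto s atTop (𝓝 0) := tendsto_one_div_add_atTop_nhds_zero_nat
  have hmem : ∀ n, s n • u₀ + (1 - s n) • w ∈ cyl μ ℓ := by
    intro n
    have := (convex_cyl (μ := μ) ℓ).combo_interior_closure_mem_interior
      (x := u₀) (y := w) (by rw [(isOpen_cyl ℓ).interior_eq]; exact interior_subset_cyl ℓ hu₀) hw
      (hs0 n) (by linarith [hs1 n] : 0 ≤ 1 - s n) (by ring)
    exact interior_subset this
  have hineq : ∀ n, ENNReal.ofReal (Real.exp (⟪s n • u₀ + (1 - s n) • w, v⟫ - a)) ≤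
      ENNReal.ofReal (s n) * lap (μ.restrict (hyp ℓ c)) u₀ +
        ENNReal.ofReal (1 - s n) * lap (μ.restrict (hyp ℓ c)) w := fun n =>
    (hcyl _ (hmem n)).trans (lap_combo _ _ (hs0 n).le (by linarith [hs1 n]) (by ring))
  refine le_of_tendsto_of_tendsto' (b := atTop) ?_ ?_ hineq
  · have h1 : Tendsto (fun n => s n • u₀ + (1 - s n) • w) atTop (𝓝 ((0:ℝ) • u₀ + (1 - (0:ℝ)) • w)) :=
      (hslim.smul_const u₀).add ((tendsto_const_nhds.sub hslim).smul_const w)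
    simp only [zero_smul, zero_add, sub_zero, one_smul] at h1
    refine (ENNReal.continuous_ofReal.tendsto _).comp ((Real.continuous_exp.tendsto _).comp ?_)
    exact (h1.inner tendsto_const_nhds).sub tendsto_const_nhds
  · have h1 : Tendsto (fun n => ENNReal.ofReal (s n) * lap (μ.restrict (hyp ℓ c)) u₀ +
        ENNReal.ofReal (1 - s n) * lap (μ.restrict (hyp ℓ c)) w) atTop
        (𝓝 (ENNReal.ofReal 0 * lap (μ.restrict (hyp ℓ c)) u₀ +
          ENNReal.ofReal (1 - 0) * lap (μ.restrict (hyp ℓ c)) w)) := by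
      refine (ENNReal.Tendsto.mul_const ?_ (Or.inr hu₀t)).add
        (ENNReal.Tendsto.mul_const ?_ (Or.inr hwt))
      · exact (ENNReal.continuous_ofReal.tendsto _).comp hslim
      · exact (ENNReal.continuous_ofReal.tendsto _).comp (tendsto_const_nhds.sub hslim)
    simpa using h1

lemma edom_subset_edom_cond [IsProbabilityMeasure μ] {L : Set (EuclideanSpace ℝ (Fin d))}
    (h : μ L ≠ 0) : edom (logLaplace μ) ⊆ edom (logLaplace (μ[|L])) := by
  intro u hu
  rw [mem_edom_iff] at *
  have h1 := (lap_mono (Measure.restrict_le_self (μ := μ) (s := L)) u).trans_lt hu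
  rw [lap_restrict_eq h] at h1
  exact (ENNReal.mul_lt_top_iff.1 h1).elim (fun h => h.2) (fun h' => h'.elim (fun h2 => absurd h2 h)
    (fun h2 => by rw [h2]; exact ENNReal.zero_lt_top))

/-- Under the projection condition for the hyperplane `L = {ℓ·x = c}`, the rate functions of `X`
and of `X|L` differ on `L` by the constant `log P(X ∈ L)`. -/
lemma rateFn_le_iff_cond [IsProbabilityMeasure μ] {ℓ v : EuclideanSpace ℝ (Fin d)} {c : ℝ}
    (hne : (interior (edom (logLaplace μ))).Nonempty)
    (hμ : ∀ᵐ x ∂μ, ⟪ℓ, x⟫ ≤ c) (hL : μ (hyp ℓ c) ≠ 0)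
    (hA : interior (edom (logLaplace (μ[|hyp ℓ c]))) ⊆ cyl μ ℓ)
    (hv : ⟪ℓ, v⟫ = c) (a : ℝ) :
    rateFn μ v ≤ (a : EReal) ↔
      rateFn (μ[|hyp ℓ c]) v ≤ ((a + Real.log (μ (hyp ℓ c)).toReal : ℝ) : EReal) := by
  have hscale : ∀ u, ENNReal.ofReal (Real.exp (⟪u, v⟫ - a)) = μ (hyp ℓ c) *
      ENNReal.ofReal (Real.exp (⟪u, v⟫ - (a + Real.log (μ (hyp ℓ c)).toReal))) := by
    intro u
    have hpos := ENNReal.toReal_pos hL (measure_ne_top _ _)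
    rw [show ⟪u, v⟫ - a = Real.log (μ (hyp ℓ c)).toReal +
      (⟪u, v⟫ - (a + Real.log (μ (hyp ℓ c)).toReal)) by ring, Real.exp_add, Real.exp_log hpos,
      ENNReal.ofReal_mul hpos.le, ENNReal.ofReal_toReal (measure_ne_top _ _)]
  constructor
  · intro h
    rw [rateFn_le_iff]
    intro u
    by_cases hu : u ∈ edom (logLaplace (μ[|hyp ℓ c]))
    swap
    · rw [mem_edom_iff, not_lt_top_iff] at hu; rw [hu]; exact le_top
    have hne' := hne.mono (interior_mono (edom_subset_edom_cond hL))
    have hcl : u ∈ closure (cyl μ ℓ) :=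
      closure_mono hA (subset_closure_interior_edom hne' hu)
    have h1 := exp_le_lap_restrict hne hμ hv h hcl
    rw [lap_restrict_eq hL, hscale] at h1
    exact (ENNReal.mul_le_mul_iff_right hL (measure_ne_top _ _)).1 h1
  · intro h
    rw [rateFn_le_iff] at h ⊢
    intro u
    refine le_trans ?_ (lap_mono (Measure.restrict_le_self (μ := μ) (s := hyp ℓ c)) u)
    rw [lap_restrict_eq hL, hscale]
    exact mul_le_mul_right (h u) _

/-- Strict convexity of the rate function forces `int D(K_{X|L}) ⊆ int D(K_X) + ℝℓ`. Otherwise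
`int D(K_{X|L})` contains a boundary point `b` of the cylinder; with `p` a subgradient of
`K_{X|L}` at `b` and `n` an outer normal of the cylinder at `b`, the rate function is affine on the
ray `p + tn`, which lies in `L`. -/
lemma interior_cond_subset_cyl [IsProbabilityMeasure μ] {ℓ : EuclideanSpace ℝ (Fin d)} {c : ℝ}
    (hs : StrictlyConvexOnSet (rateFn μ) (edom (rateFn μ)))
    (hne : (interior (edom (logLaplace μ))).Nonempty)
    (hμ : ∀ᵐ x ∂μ, ⟪ℓ, x⟫ ≤ c) (hL : μ (hyp ℓ c) ≠ 0) :
    interior (edom (logLaplace (μ[|hyp ℓ c]))) ⊆ cyl μ ℓ := by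
  have : IsProbabilityMeasure (μ[|hyp ℓ c]) := cond_isProbabilityMeasure hL
  set ν := μ[|hyp ℓ c] with hν
  by_contra hcon
  rw [not_subset] at hcon
  obtain ⟨w, hw, hwc⟩ := hcon
  have hsub := interior_mono (edom_subset_edom_cond (μ := μ) hL)
  -- a boundary point of the cylinder inside `int D(K_{X|L})`
  obtain ⟨b, hbi, hbc, hbn⟩ : ∃ b, b ∈ interior (edom (logLaplace ν)) ∧
      b ∈ closure (cyl μ ℓ) ∧ b ∉ cyl μ ℓ := by
    by_contra! h
    have hpre : IsPreconnected (interior (edom (logLaplace ν))) :=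
      convex_edom.interior.isPreconnected
    obtain ⟨u₀, hu₀⟩ := hne
    obtain ⟨z, hz, hz1, hz2⟩ := hpre (cyl μ ℓ) (closure (cyl μ ℓ))ᶜ (isOpen_cyl ℓ)
      isClosed_closure.isOpen_compl
      (fun z hz => by
        by_cases hzc : z ∈ closure (cyl μ ℓ)
        · exact Or.inl (h z hz hzc)
        · exact Or.inr hzc)
      ⟨u₀, hsub hu₀, interior_subset_cyl ℓ hu₀⟩
      ⟨w, hw, fun hwcl => hwc (h w hw hwcl)⟩
    exact hz2 (subset_closure hz1)
  obtain ⟨n, hn0, hn⟩ := exists_normal (convex_cyl ℓ) (isOpen_cyl ℓ)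
    (hne.mono (interior_subset_cyl ℓ)) hbn
  obtain ⟨p, -, hp⟩ := exists_gradient hbi
  have hb : lap ν b < ⊤ := mem_edom_iff.1 (interior_subset hbi)
  have hnℓ : ⟪n, ℓ⟫ = 0 := by
    obtain ⟨u₀, hu₀⟩ := hne
    by_contra hne0
    have := hn (u₀ + ((⟪n, b⟫ - ⟪n, u₀⟫ + 1) / ⟪n, ℓ⟫) • ℓ) (subset_closure
      ⟨-((⟪n, b⟫ - ⟪n, u₀⟫ + 1) / ⟪n, ℓ⟫), by simpa [add_assoc] using hu₀⟩)
    rw [inner_add_right, inner_smul_right, div_mul_cancel₀ _ hne0] at this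
    linarith
  have hpℓ : ⟪ℓ, p⟫ = c := by
    have key : ∀ t : ℝ, t * ⟪ℓ, p⟫ ≤ t * c := by
      intro t
      have h1 := hp (b + t • ℓ)
      rw [lap_add_smul (ae_cond_hyp ℓ c), add_sub_cancel_left, real_inner_smul_left,
        ENNReal.mul_le_mul_iff_left (lap_pos b).ne' hb.ne,
        ENNReal.ofReal_le_ofReal_iff (Real.exp_pos _).le, Real.exp_le_exp] at h1
      exact h1
    have := key 1
    have := key (-1)
    linarith
  have hmpos := ENNReal.toReal_pos hL (measure_ne_top μ _)
  have hnp : ∀ t : ℝ, ⟪ℓ, p + t • n⟫ = c := by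
    intro t; rw [inner_add_right, inner_smul_right, real_inner_comm n ℓ, hnℓ, hpℓ]; ring
  have hmb : lap (μ.restrict (hyp ℓ c)) b =
      ENNReal.ofReal (Real.exp (Real.log (μ (hyp ℓ c)).toReal + rlog ν b)) := by
    rw [lap_restrict_eq hL, Real.exp_add, Real.exp_log hmpos, ENNReal.ofReal_mul hmpos.le,
      ENNReal.ofReal_toReal (measure_ne_top _ _), ofReal_exp_rlog hb]
  refine hs.false_of_affine (p := p) (n := n) (w := b)
    (a := Real.log (μ (hyp ℓ c)).toReal + rlog ν b) hn0 fun t ht => ?_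
  refine eq_coe_of_forall_le_iff fun a => ⟨fun h => ?_, fun h => ?_⟩
  · have h1 := exp_le_lap_restrict hne hμ (hnp t) h hbc
    rw [hmb, ENNReal.ofReal_le_ofReal_iff (Real.exp_pos _).le, Real.exp_le_exp] at h1
    linarith
  · refine le_trans ?_ (EReal.coe_le_coe_iff.2 h)
    rw [rateFn_le_iff]
    intro u
    by_cases hu : lap μ u < ⊤
    swap
    · rw [not_lt_top_iff.1 hu]; exact le_top
    have hnu := hn u (closure_mono (interior_subset_cyl ℓ)
      (subset_closure_interior_edom hne (mem_edom_iff.2 hu)))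
    refine le_trans ?_ (lap_mono (Measure.restrict_le_self (μ := μ) (s := hyp ℓ c)) u)
    rw [lap_restrict_eq hL]
    refine le_trans ?_ (mul_le_mul_right (hp u) _)
    rw [mul_left_comm, ← lap_restrict_eq hL, hmb, ← ENNReal.ofReal_mul (Real.exp_pos _).le,
      ← Real.exp_add]
    refine ENNReal.ofReal_le_ofReal (Real.exp_le_exp.2 ?_)
    simp only [inner_add_right, inner_smul_right, inner_sub_left]
    rw [real_inner_comm n u, real_inner_comm n b]
    nlinarith

end Hyperplane

/-! ### Attainment of the supremum defining the rate function -/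

section Attainment

variable {d : ℕ} {μ : Measure (EuclideanSpace ℝ (Fin d))}

/-- If `E[exp(t ℓ·X)] ≤ 1` for all `t ≥ 0` then `ℓ·X ≤ 0` almost surely, by Markov's inequality. -/
lemma ae_inner_nonpos {ℓ : EuclideanSpace ℝ (Fin d)}
    (h : ∀ t : ℝ, 0 ≤ t → lap μ (t • ℓ) ≤ 1) : ∀ᵐ x ∂μ, ⟪ℓ, x⟫ ≤ 0 := by
  have key : ∀ n : ℕ, μ {x | 1 / ((n : ℝ) + 1) ≤ ⟪ℓ, x⟫} = 0 := by
    intro n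
    set ε : ℝ := 1 / ((n : ℝ) + 1) with hε
    have hε0 : 0 < ε := by positivity
    have hb : ∀ t : ℕ, μ {x | ε ≤ ⟪ℓ, x⟫} ≤ ENNReal.ofReal (Real.exp (-(t * ε))) := by
      intro t
      have h1 : ENNReal.ofReal (Real.exp (t * ε)) * μ {x | ε ≤ ⟪ℓ, x⟫} ≤ 1 := by
        refine le_trans ?_ (h t (Nat.cast_nonneg t))
        refine le_trans ?_ (mul_meas_ge_le_lintegral (measurable_expInner ((t : ℝ) • ℓ))
          (ENNReal.ofReal (Real.exp (t * ε))))
        refine mul_le_mul_right (measure_mono fun x hx => ?_) _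
        simp only [mem_ofPred_eq] at hx ⊢
        refine ENNReal.ofReal_le_ofReal (Real.exp_le_exp.2 ?_)
        rw [real_inner_smul_left]
        exact mul_le_mul_of_nonneg_left hx (Nat.cast_nonneg t)
      calc μ {x | ε ≤ ⟪ℓ, x⟫} = ENNReal.ofReal (Real.exp (-(t * ε))) *
            (ENNReal.ofReal (Real.exp (t * ε)) * μ {x | ε ≤ ⟪ℓ, x⟫}) := by
            rw [← mul_assoc, ← ENNReal.ofReal_mul (Real.exp_pos _).le, ← Real.exp_add]; simp
        _ ≤ ENNReal.ofReal (Real.exp (-(t * ε))) * 1 := mul_le_mul_right h1 _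
        _ = _ := mul_one _
    have hlim : Tendsto (fun t : ℕ => ENNReal.ofReal (Real.exp (-(t * ε)))) atTop (𝓝 0) := by
      rw [← ENNReal.ofReal_zero]
      refine (ENNReal.continuous_ofReal.tendsto 0).comp (Real.tendsto_exp_atBot.comp ?_)
      exact tendsto_neg_atTop_atBot.comp (tendsto_natCast_atTop_atTop.atTop_mul_const hε0)
    exact le_antisymm (ge_of_tendsto' hlim hb) zero_le
  have hall : ∀ᵐ x ∂μ, ∀ n : ℕ, ⟪ℓ, x⟫ < 1 / ((n : ℝ) + 1) := by
    rw [ae_all_iff]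
    intro n
    rw [ae_iff]
    simpa only [not_lt] using key n
  filter_upwards [hall] with x hx
  exact ge_of_tendsto' tendsto_one_div_add_atTop_nhds_zero_nat fun n => (hx n).le

/-- The directions `ℓ` with `ℓ·X = 0` almost surely. -/
def nullDirs {d : ℕ} (μ : Measure (EuclideanSpace ℝ (Fin d))) :
    Submodule ℝ (EuclideanSpace ℝ (Fin d)) where
  carrier := {ℓ | ∀ᵐ x ∂μ, ⟪ℓ, x⟫ = 0}
  zero_mem' := by simp
  add_mem' := by
    intro a b ha hb
    simp only [mem_ofPred_eq] at *
    filter_upwards [ha, hb] with x h1 h2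
    rw [inner_add_left, h1, h2, add_zero]
  smul_mem' := by
    intro r a ha
    simp only [mem_ofPred_eq] at *
    filter_upwards [ha] with x h1
    rw [real_inner_smul_left, h1, mul_zero]

/-- The Laplace transform of a law that is not carried, nontrivially, by a half-space with `0` on
its boundary attains its minimum: modulo the null directions its sublevel set is compact. -/
lemma exists_min_lap [IsProbabilityMeasure μ]
    (h : ∀ ℓ, (∀ᵐ x ∂μ, ⟪ℓ, x⟫ ≤ 0) → ∀ᵐ x ∂μ, ⟪ℓ, x⟫ = 0) :
    ∃ u, ∀ w, lap μ u ≤ lap μ w := by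
  set W := nullDirs μ with hW
  set S : Set (EuclideanSpace ℝ (Fin d)) := {u | u ∈ Wᗮ ∧ lap μ u ≤ 1} with hS
  have hcl1 : IsClosed {u : EuclideanSpace ℝ (Fin d) | lap μ u ≤ 1} :=
    lowerSemicontinuous_lap.isClosed_preimage 1
  have hScl : IsClosed S := (Submodule.isClosed_orthogonal W).inter hcl1
  have hlap0 : lap μ 0 = 1 := by rw [lap_zero, measure_univ]
  have hbdd : Bornology.IsBounded S := by
    by_contra hnb
    have hex : ∀ n : ℕ, ∃ u ∈ S, (n : ℝ) + 1 < ‖u‖ := by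
      intro n
      by_contra! hc
      exact hnb (isBounded_iff_forall_norm_le.2 ⟨_, hc⟩)
    choose u huS hun using hex
    have hpos : ∀ n, 0 < ‖u n‖ := fun n => lt_trans (by positivity) (hun n)
    set e : ℕ → EuclideanSpace ℝ (Fin d) := fun n => ‖u n‖⁻¹ • u n with he
    have hes : ∀ n, e n ∈ Metric.sphere (0 : EuclideanSpace ℝ (Fin d)) 1 := by
      intro n
      rw [mem_sphere_zero_iff_norm, he]
      simp only
      rw [norm_smul, norm_inv, norm_norm, inv_mul_cancel₀ (hpos n).ne']
    obtain ⟨ℓ, hℓ, φ, hφ, hlim⟩ := (isCompact_sphere _ _).tendsto_subseq hes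
    have hℓW : ℓ ∈ Wᗮ := (Submodule.isClosed_orthogonal W).mem_of_tendsto hlim
      (Eventually.of_forall fun n => Wᗮ.smul_mem _ (huS (φ n)).1)
    have hle : ∀ t : ℝ, 0 ≤ t → lap μ (t • ℓ) ≤ 1 := by
      intro t ht
      refine hcl1.mem_of_tendsto (hlim.const_smul t) ?_
      obtain ⟨N, hN⟩ := exists_nat_gt t
      filter_upwards [eventually_ge_atTop N] with n hn
      have hnt : t ≤ ‖u (φ n)‖ := by
        have h1 : (N : ℝ) ≤ φ n := by exact_mod_cast hn.trans (hφ.id_le n)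
        linarith [hun (φ n)]
      have hr : t * ‖u (φ n)‖⁻¹ ≤ 1 := by
        rw [← div_eq_mul_inv, div_le_one (hpos _)]; exact hnt
      have hr0 : 0 ≤ t * ‖u (φ n)‖⁻¹ := mul_nonneg ht (inv_nonneg.2 (hpos _).le)
      have h1 := lap_combo (μ := μ) (u (φ n)) 0 hr0 (sub_nonneg.2 hr) (by ring)
      rw [smul_zero, add_zero, mul_smul, hlap0, mul_one] at h1
      refine h1.trans ?_
      calc _ ≤ ENNReal.ofReal (t * ‖u (φ n)‖⁻¹) * 1 + ENNReal.ofReal (1 - t * ‖u (φ n)‖⁻¹) := by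
            gcongr; exact (huS (φ n)).2
        _ = 1 := by
            rw [mul_one, ← ENNReal.ofReal_add hr0 (sub_nonneg.2 hr)]; simp
    have hℓ2 : ℓ ∈ W := h ℓ (ae_inner_nonpos hle)
    have h0 : ⟪ℓ, ℓ⟫ = 0 := (Submodule.mem_orthogonal W ℓ).1 hℓW ℓ hℓ2
    rw [inner_self_eq_zero] at h0
    rw [h0] at hℓ
    simp at hℓ
  have hcomp : IsCompact S := Metric.isCompact_of_isClosed_isBounded hScl hbdd
  obtain ⟨u, huS, hu⟩ := LowerSemicontinuousOn.exists_isMinOn (f := lap μ) (s := S)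
    ⟨0, Wᗮ.zero_mem, hlap0.le⟩ hcomp (lowerSemicontinuous_lap.lowerSemicontinuousOn _)
  refine ⟨u, fun w => ?_⟩
  obtain ⟨y, hy, z, hz, rfl⟩ := W.exists_add_mem_mem_orthogonal w
  have hyz : lap μ (y + z) = lap μ z := by
    refine lintegral_congr_ae ?_
    filter_upwards [hy] with x hx
    rw [inner_add_left, hx, zero_add]
  rw [hyz]
  rcases le_total (lap μ z) 1 with hz1 | hz1
  · exact hu ⟨hz, hz1⟩
  · exact huS.2.trans hz1

/-- Dichotomy: either `v` lies on the boundary of a half-space carrying `X` nontrivially, or the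
supremum defining `I_X(v)` is attained. -/
lemma exists_subgrad_or [IsProbabilityMeasure μ] (v : EuclideanSpace ℝ (Fin d)) :
    (∃ ℓ, (∀ᵐ x ∂μ, ⟪ℓ, x⟫ ≤ ⟪ℓ, v⟫) ∧ ¬ ∀ᵐ x ∂μ, ⟪ℓ, x⟫ = ⟪ℓ, v⟫) ∨
      ∃ u, lap μ u < ⊤ ∧ Subgrad μ u v := by
  by_cases hcase : ∃ ℓ, (∀ᵐ x ∂μ, ⟪ℓ, x⟫ ≤ ⟪ℓ, v⟫) ∧ ¬ ∀ᵐ x ∂μ, ⟪ℓ, x⟫ = ⟪ℓ, v⟫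
  · exact Or.inl hcase
  right
  push Not at hcase
  have hm : Measurable fun x : EuclideanSpace ℝ (Fin d) => x - v := measurable_id.sub_const v
  set ν := μ.map (fun x => x - v) with hν
  have : IsProbabilityMeasure ν := Measure.isProbabilityMeasure_map hm.aemeasurable
  have hlap : ∀ u, lap ν u = ENNReal.ofReal (Real.exp (-⟪u, v⟫)) * lap μ u := by
    intro u
    unfold lap
    rw [hν, lintegral_map (measurable_expInner u) hm,
      ← lintegral_const_mul _ (measurable_expInner u)]
    refine lintegral_congr fun x => ?_
    rw [← ENNReal.ofReal_mul (Real.exp_pos _).le, ← Real.exp_add, inner_sub_right]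
    ring_nf
  have hms1 : ∀ ℓ : EuclideanSpace ℝ (Fin d), MeasurableSet {x | ⟪ℓ, x⟫ ≤ 0} := fun ℓ =>
    measurableSet_le (by fun_prop) measurable_const
  have hms2 : ∀ ℓ : EuclideanSpace ℝ (Fin d), MeasurableSet {x | ⟪ℓ, x⟫ = 0} := fun ℓ =>
    measurableSet_eq_fun (by fun_prop) measurable_const
  obtain ⟨u, hu⟩ := exists_min_lap (μ := ν) (by
    intro ℓ hℓ
    rw [hν, ae_map_iff hm.aemeasurable (hms1 ℓ)] at hℓ
    rw [hν, ae_map_iff hm.aemeasurable (hms2 ℓ)]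
    have h1 := hcase ℓ (by
      filter_upwards [hℓ] with x hx
      rw [inner_sub_right] at hx; linarith)
    filter_upwards [h1] with x hx
    rw [inner_sub_right, hx, sub_self])
  refine ⟨u, ?_, fun w => ?_⟩
  · have h0 := hu 0
    rw [lap_zero, measure_univ, hlap] at h0
    by_contra hc
    rw [not_lt_top_iff.1 hc, ENNReal.mul_top (by simp [Real.exp_pos])] at h0
    simp at h0
  · have h0 := hu w
    rw [hlap, hlap] at h0
    have h1 := mul_le_mul_right h0 (ENNReal.ofReal (Real.exp ⟪w, v⟫))
    rw [← mul_assoc, ← mul_assoc, ← ENNReal.ofReal_mul (Real.exp_pos _).le,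
      ← ENNReal.ofReal_mul (Real.exp_pos _).le, ← Real.exp_add, ← Real.exp_add] at h1
    rw [inner_sub_left]
    simpa [sub_eq_add_neg] using h1

end Attainment

/-! ### Faces of convex sets -/

section Faces

variable {d : ℕ} {C F : Set (EuclideanSpace ℝ (Fin d))}

/-- `v` is a relative interior point of the convex set `C`, in the algebraic sense: every segment
of `C` ending at `v` extends past `v` within `C`. -/
def IsCore {d : ℕ} (C : Set (EuclideanSpace ℝ (Fin d))) (v : EuclideanSpace ℝ (Fin d)) : Prop :=
  v ∈ C ∧ ∀ y ∈ C, ∃ ε : ℝ, 0 < ε ∧ v + ε • (v - y) ∈ C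

lemma IsCore.eq_of_mem {v : EuclideanSpace ℝ (Fin d)} (hv : IsCore C v) (hF : IsFaceOf C F)
    (hvF : v ∈ F) : F = C := by
  refine hF.2.subset.antisymm fun y hy => ?_
  obtain ⟨ε, hε, hz⟩ := hv.2 y hy
  refine hF.2.left_mem_of_mem_openSegment hy hz hvF
    ⟨ε / (1 + ε), 1 / (1 + ε), by positivity, by positivity, by field_simp; ring, ?_⟩
  have h1 : 1 + ε ≠ 0 := by positivity
  have h2 : (ε / (1 + ε)) • y + (1 / (1 + ε)) • (v + ε • (v - y)) =
      ((1 / (1 + ε)) * (1 + ε)) • v + (ε / (1 + ε) - (1 / (1 + ε)) * ε) • y := by module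
  rw [h2, one_div_mul_cancel h1, show ε / (1 + ε) - (1 / (1 + ε)) * ε = 0 by ring]
  simp

/-- Proper separation in the affine span: a convex set has a core point, and any point of it that is
not a core point maximises over `C` a linear form that is not constant on `C`. -/
lemma core_or_separated (hC : Convex ℝ C) {v : EuclideanSpace ℝ (Fin d)} (hv : v ∈ C) :
    (∃ x, IsCore C x) ∧
      (IsCore C v ∨ ∃ ℓ, (∀ x ∈ C, ⟪ℓ, x⟫ ≤ ⟪ℓ, v⟫) ∧ ∃ x ∈ C, ⟪ℓ, x⟫ < ⟪ℓ, v⟫) := by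
  set T : Set (EuclideanSpace ℝ (Fin d)) := {z | v + z ∈ C} with hT
  set S := Submodule.span ℝ T with hS
  set A : Set S := Subtype.val ⁻¹' T with hA
  have hTc : Convex ℝ T := by
    intro x hx y hy a b ha hb hab
    have := hC hx hy ha hb hab
    have e : a • (v + x) + b • (v + y) = v + (a • x + b • y) := by
      rw [show a • (v + x) + b • (v + y) = (a + b) • v + (a • x + b • y) by module, hab, one_smul]
    rw [e] at this
    exact this
  have hAc : Convex ℝ A := hTc.linear_preimage S.subtype
  have h0A : (0 : S) ∈ A := by simp [hA, hT, hv]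
  have hspan : affineSpan ℝ A = ⊤ := by
    rw [AffineSubspace.affineSpan_eq_top_iff_vectorSpan_eq_top_of_nonempty ℝ S S ⟨0, h0A⟩,
      vectorSpan_eq_span_vsub_set_right ℝ h0A]
    simp only [vsub_eq_sub, sub_zero, image_id']
    exact Submodule.span_span_coe_preimage (R := ℝ) (s := T)
  have hinteg : (interior A).Nonempty := hAc.interior_nonempty_iff_affineSpan_eq_top.2 hspan
  have hmemA : ∀ y ∈ C, ∃ s : S, s ∈ A ∧ v + (s : EuclideanSpace ℝ (Fin d)) = y := by
    intro y hy
    have hyT : y - v ∈ T := by simpa [hT] using hy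
    exact ⟨⟨y - v, Submodule.subset_span hyT⟩, hyT, by simp⟩
  have hcore : ∀ s ∈ interior A, IsCore C (v + (s : EuclideanSpace ℝ (Fin d))) := by
    intro s hs
    refine ⟨(interior_subset hs : s ∈ A), fun y hy => ?_⟩
    obtain ⟨r, hr, rfl⟩ := hmemA y hy
    have hcont : Continuous fun ε : ℝ => s + ε • (s - r) := by fun_prop
    have hev : ∀ᶠ ε in 𝓝[>] (0 : ℝ), s + ε • (s - r) ∈ interior A := by
      refine (hcont.continuousAt.eventually_mem ?_).filter_mono nhdsWithin_le_nhds
      simpa using isOpen_interior.mem_nhds hs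
    obtain ⟨ε, hε, hε0⟩ := (hev.and self_mem_nhdsWithin).exists
    refine ⟨ε, hε0, ?_⟩
    have h1 : v + ((s + ε • (s - r) : S) : EuclideanSpace ℝ (Fin d)) ∈ C :=
      (interior_subset hε : _ ∈ A)
    convert h1 using 1
    push_cast
    module
  refine ⟨hinteg.elim fun s hs => ⟨_, hcore s hs⟩, ?_⟩
  by_cases h0 : (0 : S) ∈ interior A
  · left
    simpa using hcore 0 h0
  right
  obtain ⟨f, hf⟩ := geometric_hahn_banach_open_point hAc.interior isOpen_interior h0
  set n : S := (InnerProductSpace.toDual ℝ S).symm f with hn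
  have hfn : ∀ y, f y = ⟪(n : EuclideanSpace ℝ (Fin d)), (y : EuclideanSpace ℝ (Fin d))⟫ := by
    intro y
    rw [← Submodule.coe_inner, hn, InnerProductSpace.toDual_symm_apply]
  rw [map_zero] at hf
  refine ⟨n, fun x hx => ?_, ?_⟩
  · obtain ⟨s, hs, rfl⟩ := hmemA x hx
    have hcl : IsClosed {y : S | f y ≤ 0} := isClosed_le (by fun_prop) continuous_const
    have : s ∈ closure (interior A) := by
      rw [hAc.closure_interior_eq_closure_of_nonempty_interior hinteg]
      exact subset_closure hs
    have h1 : f s ≤ 0 := closure_minimal (fun y hy => (hf y hy).le) hcl this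
    rw [hfn] at h1
    rw [inner_add_right]
    linarith
  · obtain ⟨s, hs⟩ := hinteg
    refine ⟨_, (hcore s hs).1, ?_⟩
    have := hf s hs
    rw [hfn] at this
    rw [inner_add_right]
    linarith

lemma isFaceOf_hyp_inter (hC : Convex ℝ C) {ℓ : EuclideanSpace ℝ (Fin d)} {c : ℝ}
    (h : ∀ x ∈ C, ⟪ℓ, x⟫ ≤ c) : IsFaceOf C (hyp ℓ c ∩ C) := by
  refine ⟨Convex.inter ?_ hC, inter_subset_right, ?_⟩
  · intro x hx y hy a b _ _ hab
    simp only [hyp, mem_ofPred_eq] at *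
    rw [inner_add_right, inner_smul_right, inner_smul_right, hx, hy, ← add_mul, hab, one_mul]
  · rintro x hx y hy z ⟨hz, -⟩ ⟨a, b, ha, hb, hab, rfl⟩
    refine ⟨?_, hx⟩
    simp only [hyp, mem_ofPred_eq] at *
    rw [inner_add_right, inner_smul_right, inner_smul_right] at hz
    have hx' := h x hx
    have hy' := h y hy
    refine le_antisymm hx' (le_of_mul_le_mul_left ?_ ha)
    have : b * ⟪ℓ, y⟫ ≤ b * c := mul_le_mul_of_nonneg_left hy' hb.le
    have : c = a * c + b * c := by rw [← add_mul, hab, one_mul]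
    linarith

/-- A maximal proper face is exposed: a relative interior point of it is not one of `C`, so it is
properly separated from `C` by a hyperplane. -/
lemma IsMaxProperFace.exposed (hC : Convex ℝ C) (hF : IsMaxProperFace C F) :
    ∃ (ℓ : EuclideanSpace ℝ (Fin d)) (c : ℝ), ‖ℓ‖ = 1 ∧ (∀ x ∈ C, ⟪ℓ, x⟫ ≤ c) ∧
      F = hyp ℓ c ∩ C ∧ ¬ C ⊆ hyp ℓ c := by
  obtain ⟨hface, ⟨f, hf⟩, hne, hmax⟩ := hF
  obtain ⟨v, hv⟩ := (core_or_separated hface.1 hf).1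
  have hvC := hface.2.subset hv.1
  rcases (core_or_separated hC hvC).2 with hcore | ⟨m, hm, x₀, hx₀, hlt⟩
  · exact absurd (hcore.eq_of_mem hface hv.1) hne
  have hm0 : m ≠ 0 := by rintro rfl; simp at hlt
  have hpos : 0 < ‖m‖⁻¹ := inv_pos.2 (norm_pos_iff.2 hm0)
  have hin : ∀ x, ⟪‖m‖⁻¹ • m, x⟫ = ‖m‖⁻¹ * ⟪m, x⟫ := fun x => real_inner_smul_left _ _ _
  have hle : ∀ x ∈ C, ⟪‖m‖⁻¹ • m, x⟫ ≤ ⟪‖m‖⁻¹ • m, v⟫ := fun x hx => by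
    rw [hin, hin]; exact mul_le_mul_of_nonneg_left (hm x hx) hpos.le
  have hnot : ¬ C ⊆ hyp (‖m‖⁻¹ • m) ⟪‖m‖⁻¹ • m, v⟫ := by
    intro h
    have h1 : ⟪‖m‖⁻¹ • m, x₀⟫ = ⟪‖m‖⁻¹ • m, v⟫ := h hx₀
    rw [hin, hin] at h1
    exact hlt.ne (mul_left_cancel₀ hpos.ne' h1)
  refine ⟨‖m‖⁻¹ • m, ⟪‖m‖⁻¹ • m, v⟫, ?_, hle, ?_, hnot⟩
  · rw [norm_smul, norm_inv, norm_norm, inv_mul_cancel₀ (norm_ne_zero_iff.2 hm0)]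
  have hG := isFaceOf_hyp_inter hC hle
  have hFG : F ⊆ hyp (‖m‖⁻¹ • m) ⟪‖m‖⁻¹ • m, v⟫ ∩ C := by
    have h1 : IsFaceOf F (hyp (‖m‖⁻¹ • m) ⟪‖m‖⁻¹ • m, v⟫ ∩ F) :=
      isFaceOf_hyp_inter hface.1 fun x hx => hle x (hface.2.subset hx)
    have h2 := hv.eq_of_mem h1 ⟨rfl, hv.1⟩
    exact fun x hx => ⟨(h2.symm.subset hx).1, hface.2.subset hx⟩
  rcases hmax _ hG ⟨f, hFG hf⟩ hFG with h | h
  · exact absurd (fun x hx => (h.symm.subset hx).1) hnot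
  · exact h.symm

/-- Every proper nonempty face is contained in a maximal one, by Zorn's lemma among the faces missing a
fixed relative interior point of `C`. -/
lemma exists_isMaxProperFace (hC : Convex ℝ C) (hF : IsFaceOf C F) (hne : F.Nonempty)
    (hFC : F ≠ C) : ∃ F', IsMaxProperFace C F' ∧ F ⊆ F' := by
  obtain ⟨f, hf⟩ := hne
  obtain ⟨x₀, hx₀⟩ := (core_or_separated hC (hF.2.subset hf)).1
  obtain ⟨m, hFm, hm⟩ := zorn_subset_nonempty {G | IsFaceOf C G ∧ x₀ ∉ G} (by
    intro c hcS hc hcne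
    refine ⟨⋃₀ c, ⟨⟨?_, ?_, ?_⟩, ?_⟩, fun s hs => subset_sUnion_of_mem hs⟩
    · exact hc.directedOn.convex_sUnion fun {G} hG => (hcS hG).1.1
    · exact sUnion_subset fun G hG => (hcS hG).1.2.subset
    · rintro x hx y hy z ⟨G, hG, hzG⟩ hz
      exact ⟨G, hG, (hcS hG).1.2.left_mem_of_mem_openSegment hx hy hzG hz⟩
    · rintro ⟨G, hG, hxG⟩
      exact (hcS hG).2 hxG) F ⟨hF, fun h => hFC (hx₀.eq_of_mem hF h)⟩
  refine ⟨m, ⟨hm.prop.1, ⟨f, hFm hf⟩, ?_, ?_⟩, hFm⟩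
  · rintro rfl
    exact hm.prop.2 hx₀.1
  · intro G hG _ hmG
    by_cases hxG : x₀ ∈ G
    · exact Or.inl (hx₀.eq_of_mem hG hxG)
    · exact Or.inr ((hm.le_of_ge ⟨hG, hxG⟩ hmG).antisymm hmG)

end Faces

/-! ### The convex support, the projection property, and both implications -/

section Support

variable {d : ℕ} {μ : Measure (EuclideanSpace ℝ (Fin d))}

lemma msupp_eq_support : msupp μ = μ.support := by
  rw [Measure.support_eq_forall_isOpen]
  ext x
  exact ⟨fun h U hx hU => h U hU hx, fun h U hU hx => h U hx hU⟩

lemma ae_mem_convSupp : ∀ᵐ x ∂μ, x ∈ convSupp μ := by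
  have : μ.support ∈ ae μ := Measure.support_mem_ae
  filter_upwards [this] with x hx
  exact subset_convexHull ℝ _ (msupp_eq_support ▸ hx)

lemma convSupp_subset {A : Set (EuclideanSpace ℝ (Fin d))} (hA : IsClosed A) (hAc : Convex ℝ A)
    (h : ∀ᵐ x ∂μ, x ∈ A) : convSupp μ ⊆ A := by
  refine convexHull_min ?_ hAc
  rw [msupp_eq_support]
  exact Measure.support_subset_of_isClosed hA h

lemma convex_hyp (ℓ : EuclideanSpace ℝ (Fin d)) (c : ℝ) : Convex ℝ (hyp ℓ c) := by
  intro x hx y hy a b _ _ hab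
  simp only [hyp, mem_ofPred_eq] at *
  rw [inner_add_right, inner_smul_right, inner_smul_right, hx, hy, ← add_mul, hab, one_mul]

lemma convSupp_le {ℓ : EuclideanSpace ℝ (Fin d)} {c : ℝ} (h : ∀ᵐ x ∂μ, ⟪ℓ, x⟫ ≤ c) :
    ∀ x ∈ convSupp μ, ⟪ℓ, x⟫ ≤ c := by
  refine convSupp_subset (A := {x | ⟪ℓ, x⟫ ≤ c}) (isClosed_le (by fun_prop) continuous_const) ?_ h
  exact convex_halfSpace_le (innerSL ℝ ℓ).isLinear c

lemma convSupp_subset_hyp {ℓ : EuclideanSpace ℝ (Fin d)} {c : ℝ} (h : ∀ᵐ x ∂μ, ⟪ℓ, x⟫ = c) :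
    convSupp μ ⊆ hyp ℓ c :=
  convSupp_subset (isClosed_eq (by fun_prop) continuous_const) (convex_hyp ℓ c) h

lemma inter_convSupp_ae_eq (L : Set (EuclideanSpace ℝ (Fin d))) :
    (L ∩ convSupp μ : Set (EuclideanSpace ℝ (Fin d))) =ᵐ[μ] L := by
  rw [eventuallyEq_set]
  filter_upwards [ae_mem_convSupp (μ := μ)] with x hx
  simp [hx]

lemma cond_congr_ae {A B : Set (EuclideanSpace ℝ (Fin d))} (h : A =ᵐ[μ] B) : μ[|A] = μ[|B] := by
  rw [ProbabilityTheory.cond, ProbabilityTheory.cond, measure_congr h, Measure.restrict_congr_set h]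

lemma measure_hyp_lt_one [IsProbabilityMeasure μ] {ℓ : EuclideanSpace ℝ (Fin d)} {c : ℝ}
    (h : ¬ ∀ᵐ x ∂μ, ⟪ℓ, x⟫ = c) : μ (hyp ℓ c) < 1 := by
  refine lt_of_le_of_ne prob_le_one fun h1 => h ?_
  exact (mem_ae_iff_prob_eq_one (measurableSet_hyp ℓ c)).2 h1

/-- Every face in `F*₊(C_X)` is cut out of `C_X` by a supporting hyperplane `L` with
`0 < P(X ∈ L) < 1`, and conditioning on the face amounts to conditioning on `L`. -/
lemma facesPlus_exposed [IsProbabilityMeasure μ] {C : Set (EuclideanSpace ℝ (Fin d))}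
    (hC : C ∈ facesPlus μ) : ∃ (ℓ : EuclideanSpace ℝ (Fin d)) (c : ℝ), ‖ℓ‖ = 1 ∧
      (∀ᵐ x ∂μ, ⟪ℓ, x⟫ ≤ c) ∧ SupportsSet ℓ c (convSupp μ) ∧ C ⊆ hyp ℓ c ∧
      0 < μ (hyp ℓ c) ∧ (¬ ∀ᵐ x ∂μ, ⟪ℓ, x⟫ = c) ∧ μ[|C] = μ[|hyp ℓ c] := by
  obtain ⟨hmax, hpos⟩ := hC
  obtain ⟨ℓ, c, hℓ, hle, rfl, hnot⟩ := hmax.exposed (convex_convexHull ℝ _)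
  refine ⟨ℓ, c, hℓ, ?_, ⟨hmax.2.1, Or.inl hle⟩, inter_subset_left, ?_, ?_, ?_⟩
  · filter_upwards [ae_mem_convSupp (μ := μ)] with x hx using hle x hx
  · exact hpos.trans_le (measure_mono inter_subset_left)
  · exact fun h => hnot (convSupp_subset_hyp h)
  · exact cond_congr_ae (inter_convSupp_ae_eq _)

/-- For a set with nonempty interior, the relative interior is the interior. -/
lemma intrinsicInterior_eq_interior {A : Set (EuclideanSpace ℝ (Fin d))}
    (hne : (interior A).Nonempty) : intrinsicInterior ℝ A = interior A := by
  have hspan : affineSpan ℝ A = ⊤ := by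
    have h1 : affineSpan ℝ (interior A) = ⊤ := isOpen_interior.affineSpan_eq_top hne
    exact top_le_iff.1 (h1 ▸ affineSpan_mono ℝ interior_subset)
  refine Subset.antisymm ?_ interior_subset_intrinsicInterior
  rintro _ ⟨z, hz, rfl⟩
  have hop : IsOpen ((affineSpan ℝ A : AffineSubspace ℝ _) : Set (EuclideanSpace ℝ (Fin d))) := by
    rw [hspan]; simp
  have h2 : IsOpen ((↑) '' interior ((↑) ⁻¹' A : Set (affineSpan ℝ A)) :
      Set (EuclideanSpace ℝ (Fin d))) := hop.isOpenMap_subtype_val _ isOpen_interior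
  refine interior_maximal ?_ h2 ⟨z, hz, rfl⟩
  rintro _ ⟨w, hw, rfl⟩
  have hwA : w ∈ (Subtype.val ⁻¹' A : Set (affineSpan ℝ A)) := interior_subset hw
  exact hwA

end Support

section Projection

variable {d : ℕ} {μ : Measure (EuclideanSpace ℝ (Fin d))}

lemma projHyp_add_smul {ℓ : EuclideanSpace ℝ (Fin d)} (hℓ : ‖ℓ‖ = 1) (c t : ℝ)
    (w : EuclideanSpace ℝ (Fin d)) : projHyp ℓ c (w + t • ℓ) = projHyp ℓ c w := by
  unfold projHyp
  rw [inner_add_right, inner_smul_right, real_inner_self_eq_norm_sq, hℓ]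
  module

/-- In terms of interiors, the projection condition for `L` says
`int D(K_{X|L}) ⊆ int D(K_X) + ℝℓ`. -/
lemma proj_eq_iff [IsProbabilityMeasure μ] {ℓ : EuclideanSpace ℝ (Fin d)} {c : ℝ} (hℓ : ‖ℓ‖ = 1)
    (hne : (interior (edom (logLaplace μ))).Nonempty) (hL : μ (hyp ℓ c) ≠ 0) :
    projHyp ℓ c '' intrinsicInterior ℝ (edom (logLaplace μ)) =
      projHyp ℓ c '' intrinsicInterior ℝ (edom (logLaplace (μ[|hyp ℓ c]))) ↔
    interior (edom (logLaplace (μ[|hyp ℓ c]))) ⊆ cyl μ ℓ := by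
  have hsub := interior_mono (edom_subset_edom_cond (μ := μ) hL)
  rw [intrinsicInterior_eq_interior hne, intrinsicInterior_eq_interior (hne.mono hsub)]
  constructor
  · intro h w hw
    obtain ⟨u, hu, huw⟩ := h.symm.subset (mem_image_of_mem _ hw)
    refine ⟨(c - ⟪ℓ, w⟫) - (c - ⟪ℓ, u⟫), ?_⟩
    have : w + ((c - ⟪ℓ, w⟫) - (c - ⟪ℓ, u⟫)) • ℓ = u := by
      unfold projHyp at huw
      rw [sub_smul, ← add_sub_assoc, ← huw, add_sub_cancel_right]
    rw [this]
    exact hu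
  · intro h
    refine (image_mono hsub).antisymm ?_
    rintro _ ⟨w, hw, rfl⟩
    obtain ⟨t, ht⟩ := h hw
    exact ⟨_, ht, projHyp_add_smul hℓ c t w⟩

lemma hyp_neg (ℓ : EuclideanSpace ℝ (Fin d)) (c : ℝ) : hyp (-ℓ) (-c) = hyp ℓ c := by
  ext x
  simp [hyp]

lemma cyl_neg_subset (ℓ : EuclideanSpace ℝ (Fin d)) : cyl μ (-ℓ) ⊆ cyl μ ℓ := by
  rintro u ⟨t, ht⟩
  exact ⟨-t, by simpa using ht⟩

lemma condA_of_strict [IsProbabilityMeasure μ]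
    (hs : StrictlyConvexOnSet (rateFn μ) (edom (rateFn μ))) : CondA μ := by
  intro ℓ c hℓ hsupp hpos _
  have hne := interior_nonempty_of_strict hs
  rw [proj_eq_iff hℓ hne hpos.ne']
  rcases hsupp.2 with h | h
  · refine interior_cond_subset_cyl hs hne ?_ hpos.ne'
    filter_upwards [ae_mem_convSupp (μ := μ)] with x hx using h x hx
  · have := interior_cond_subset_cyl (ℓ := -ℓ) (c := -c) hs hne (by
      filter_upwards [ae_mem_convSupp (μ := μ)] with x hx
      rw [inner_neg_left]; linarith [h x hx]) (by rw [hyp_neg]; exact hpos.ne')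
    rw [hyp_neg] at this
    exact this.trans (cyl_neg_subset ℓ)

lemma rateFn_eq_iff_cond [IsProbabilityMeasure μ] {ℓ v : EuclideanSpace ℝ (Fin d)} {c : ℝ}
    (hne : (interior (edom (logLaplace μ))).Nonempty)
    (hμ : ∀ᵐ x ∂μ, ⟪ℓ, x⟫ ≤ c) (hL : μ (hyp ℓ c) ≠ 0)
    (hA : interior (edom (logLaplace (μ[|hyp ℓ c]))) ⊆ cyl μ ℓ)
    (hv : ⟪ℓ, v⟫ = c) (b : ℝ) :
    rateFn μ v = (b : EReal) ↔
      rateFn (μ[|hyp ℓ c]) v = ((b + Real.log (μ (hyp ℓ c)).toReal : ℝ) : EReal) := by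
  have key := rateFn_le_iff_cond hne hμ hL hA hv
  constructor
  · intro h
    refine eq_coe_of_forall_le_iff fun a => ?_
    have := key (a - Real.log (μ (hyp ℓ c)).toReal)
    rw [sub_add_cancel, h, EReal.coe_le_coe_iff] at this
    rw [← this]
    constructor <;> intro <;> linarith
  · intro h
    refine eq_coe_of_forall_le_iff fun a => ?_
    rw [key a, h, EReal.coe_le_coe_iff, add_le_add_iff_right]

/-- Being finite and affine on a segment is insensitive to adding a constant. -/
lemma affine_transfer {f g : EuclideanSpace ℝ (Fin d) → EReal} {x y : EuclideanSpace ℝ (Fin d)}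
    (κ : ℝ)
    (h : ∀ z ∈ segment ℝ x y, ∀ b : ℝ, f z = (b : EReal) → g z = ((b + κ : ℝ) : EReal))
    (hfin : ∀ z ∈ segment ℝ x y, ∃ b : ℝ, f z = (b : EReal))
    (haff : ∀ t : ℝ, t ∈ Icc (0 : ℝ) 1 →
      f ((1 - t) • x + t • y) = ((1 - t : ℝ) : EReal) * f x + ((t : ℝ) : EReal) * f y) :
    segment ℝ x y ⊆ edom g ∧ ∀ t : ℝ, t ∈ Icc (0 : ℝ) 1 →
      g ((1 - t) • x + t • y) = ((1 - t : ℝ) : EReal) * g x + ((t : ℝ) : EReal) * g y := by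
  constructor
  · intro z hz
    obtain ⟨b, hb⟩ := hfin z hz
    change g z < ⊤
    rw [h z hz b hb]
    exact EReal.coe_lt_top _
  · intro t ht
    obtain ⟨a, ha⟩ := hfin x (left_mem_segment ℝ x y)
    obtain ⟨b, hb⟩ := hfin y (right_mem_segment ℝ x y)
    have h1 := haff t ht
    rw [ha, hb] at h1
    have hz : (1 - t) • x + t • y ∈ segment ℝ x y :=
      ⟨1 - t, t, sub_nonneg.2 ht.2, ht.1, by ring, rfl⟩
    rw [h x (left_mem_segment ℝ x y) a ha, h y (right_mem_segment ℝ x y) b hb,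
      h _ hz ((1 - t) * a + t * b) (by rw [h1]; norm_cast)]
    norm_cast
    ring_nf

lemma inner_eq_of_mem_edom [IsProbabilityMeasure μ] {ℓ : EuclideanSpace ℝ (Fin d)} {c : ℝ}
    (h : ∀ᵐ x ∂μ, ⟪ℓ, x⟫ = c) {z : EuclideanSpace ℝ (Fin d)} (hz : z ∈ edom (rateFn μ)) :
    ⟪ℓ, z⟫ = c := by
  have h1 := inner_le_of_mem_edom (h.mono fun _ hx => hx.le) hz
  have h2 := inner_le_of_mem_edom (ℓ := -ℓ) (c := -c)
    (h.mono fun x hx => by rw [inner_neg_left, hx]) hz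
  rw [inner_neg_left] at h2
  linarith

/-- Strict convexity of the rate function is inherited by `X|L`, since the projection condition holds
and the two rate functions differ on `L` by a constant. -/
lemma strict_cond_hyp [IsProbabilityMeasure μ] {ℓ : EuclideanSpace ℝ (Fin d)} {c : ℝ}
    (hs : StrictlyConvexOnSet (rateFn μ) (edom (rateFn μ)))
    (hμ : ∀ᵐ x ∂μ, ⟪ℓ, x⟫ ≤ c) (hL : μ (hyp ℓ c) ≠ 0) :
    StrictlyConvexOnSet (rateFn (μ[|hyp ℓ c])) (edom (rateFn (μ[|hyp ℓ c]))) := by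
  have hne := interior_nonempty_of_strict hs
  have hA := interior_cond_subset_cyl hs hne hμ hL
  have : IsProbabilityMeasure (μ[|hyp ℓ c]) := cond_isProbabilityMeasure hL
  intro x y hseg hxy haff
  obtain ⟨h1, h2⟩ := affine_transfer (g := rateFn μ) (-Real.log (μ (hyp ℓ c)).toReal)
    (fun z hz b hb => by
      rw [rateFn_eq_iff_cond hne hμ hL hA (inner_eq_of_mem_edom (ae_cond_hyp ℓ c) (hseg hz)),
        neg_add_cancel_right]
      exact hb)
    (fun z hz => exists_coe_of_mem_edom (hseg hz)) haff
  exact hs x y h1 hxy h2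

/-- Necessity, at every recursion depth: strict convexity passes to `X|C` for `C ∈ F*₊(C_X)`. -/
lemma projPropN_totallySteepN_of_strict (n : ℕ) :
    ∀ (μ : Measure (EuclideanSpace ℝ (Fin d))) [IsProbabilityMeasure μ],
      StrictlyConvexOnSet (rateFn μ) (edom (rateFn μ)) → ProjPropN n μ ∧ TotallySteepN n μ := by
  induction n with
  | zero =>
    intro μ _ hs
    exact ⟨condA_of_strict hs, steep_of_strict hs (interior_nonempty_of_strict hs)⟩
  | succ n ih =>
    intro μ _ hs
    have hstep : ∀ C ∈ facesPlus μ, ProjPropN n (μ[|C]) ∧ TotallySteepN n (μ[|C]) := by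
      intro C hC
      obtain ⟨ℓ, c, -, hle, -, -, hpos, -, hcond⟩ := facesPlus_exposed hC
      rw [hcond]
      have : IsProbabilityMeasure (μ[|hyp ℓ c]) := cond_isProbabilityMeasure hpos.ne'
      exact ih _ (strict_cond_hyp hs hle hpos.ne')
    exact ⟨⟨condA_of_strict hs, fun C hC => (hstep C hC).1⟩,
      ⟨steep_of_strict hs (interior_nonempty_of_strict hs), fun C hC => (hstep C hC).2⟩⟩

end Projection

section Sufficiency

variable {d : ℕ} {μ : Measure (EuclideanSpace ℝ (Fin d))}

/-- The directions along which `X` is almost surely constant, that is, the orthogonal complement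
of the direction of the affine hull of `C_X`. -/
def constDirs {d : ℕ} (μ : Measure (EuclideanSpace ℝ (Fin d))) :
    Submodule ℝ (EuclideanSpace ℝ (Fin d)) where
  carrier := {ℓ | ∃ c : ℝ, ∀ᵐ x ∂μ, ⟪ℓ, x⟫ = c}
  zero_mem' := ⟨0, by simp⟩
  add_mem' := by
    rintro a b ⟨r, hr⟩ ⟨s, hs⟩
    refine ⟨r + s, ?_⟩
    filter_upwards [hr, hs] with x h1 h2
    rw [inner_add_left, h1, h2]
  smul_mem' := by
    rintro t a ⟨r, hr⟩
    refine ⟨t * r, ?_⟩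
    filter_upwards [hr] with x h1
    rw [real_inner_smul_left, h1]

/-- Conditioning on a hyperplane that carries `X` partially lowers the dimension of `C_X`. -/
lemma constDirs_lt {ℓ : EuclideanSpace ℝ (Fin d)} {c : ℝ} (hpos : 0 < μ (hyp ℓ c))
    (hnot : ¬ ∀ᵐ x ∂μ, ⟪ℓ, x⟫ = c) : constDirs μ < constDirs (μ[|hyp ℓ c]) := by
  refine lt_of_le_of_ne ?_ fun h => ?_
  · rintro m ⟨r, hr⟩
    exact ⟨r, cond_absolutelyContinuous.ae_le hr⟩
  · have hmem : ℓ ∈ constDirs (μ[|hyp ℓ c]) := ⟨c, ae_cond_hyp ℓ c⟩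
    rw [← h] at hmem
    obtain ⟨r, hr⟩ := hmem
    obtain ⟨x, hx1, hx2⟩ : ∃ x ∈ hyp ℓ c, ⟪ℓ, x⟫ = r := by
      by_contra! hcon
      refine hpos.ne' (measure_mono_null (fun x hx => ?_) (ae_iff.1 hr))
      exact hcon x hx
    have : r = c := hx2.symm.trans hx1
    exact hnot (this ▸ hr)

/-- If the supremum defining `I(v)` is attained at `u` for the midpoint `v` of a segment on which
`I` is affine, then both endpoints are subgradients of `K` at `u`; steepness puts `u` in
`int D(K)`, where the subgradient is unique. -/
lemma eq_of_affine_of_subgrad [IsProbabilityMeasure μ] (hst : Steep μ)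
    (hne : (interior (edom (logLaplace μ))).Nonempty) {x y u : EuclideanSpace ℝ (Fin d)} {a b : ℝ}
    (ha : rateFn μ x = (a : EReal)) (hb : rateFn μ y = (b : EReal)) (hu : lap μ u < ⊤)
    (hv : Subgrad μ u ((1 - 1 / 2 : ℝ) • x + (1 / 2 : ℝ) • y))
    (hmid : rateFn μ ((1 - 1 / 2 : ℝ) • x + (1 / 2 : ℝ) • y) =
      (((1 - 1 / 2) * a + 1 / 2 * b : ℝ) : EReal)) : x = y := by
  rw [rateFn_eq_of_subgrad hu hv, EReal.coe_eq_coe_iff, inner_add_right, inner_smul_right,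
    inner_smul_right] at hmid
  have h1 := le_rateFn hu x
  have h2 := le_rateFn hu y
  rw [ha, EReal.coe_le_coe_iff] at h1
  rw [hb, EReal.coe_le_coe_iff] at h2
  have key : ∀ (z : EuclideanSpace ℝ (Fin d)) (r : ℝ), rateFn μ z = (r : EReal) →
      r = ⟪u, z⟫ - rlog μ u → Subgrad μ u z := by
    intro z r hz hr w
    refine le_trans (le_of_eq ?_) ((rateFn_le_iff z r).1 hz.le w)
    rw [← ofReal_exp_rlog hu, ← ENNReal.ofReal_mul (Real.exp_pos _).le, ← Real.exp_add,
      inner_sub_left, hr]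
    congr 2; ring
  have hx := key x a ha (by linarith)
  have hy := key y b hb (by linarith)
  have hui := mem_interior_of_steep hst hne hu hx
  obtain ⟨p, hp, -⟩ := exists_gradient hui
  exact (subgrad_unique hui hp hx).trans (subgrad_unique hui hp hy).symm

lemma ProjProp.condA (h : ProjProp μ) : CondA μ := h 0

lemma ProjProp.face (h : ProjProp μ) {C : Set (EuclideanSpace ℝ (Fin d))}
    (hC : C ∈ facesPlus μ) : ProjProp (μ[|C]) := fun n => (h (n + 1)).2 C hC

lemma TotallySteep.steep (h : TotallySteep μ) : Steep μ := h 0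

lemma TotallySteep.face (h : TotallySteep μ) {C : Set (EuclideanSpace ℝ (Fin d))}
    (hC : C ∈ facesPlus μ) : TotallySteep (μ[|C]) := fun n => (h (n + 1)).2 C hC

/-- Sufficiency, by induction on the dimension of `C_X`. If `I` is affine on `[x, y]` and the
supremum at the midpoint is not attained, then `[x, y]` lies in a supporting hyperplane; the
projection condition moves `[x, y]` into a maximal proper face `C` and shows that the rate
function of `X|C` is affine on it. -/
lemma strict_of_conditions (k : ℕ) :
    ∀ (μ : Measure (EuclideanSpace ℝ (Fin d))) [IsProbabilityMeasure μ],
      d < Module.finrank ℝ (constDirs μ) + k →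
      (interior (edom (logLaplace μ))).Nonempty → ProjProp μ → TotallySteep μ →
      StrictlyConvexOnSet (rateFn μ) (edom (rateFn μ)) := by
  induction k with
  | zero =>
    intro μ _ hk
    have := Submodule.finrank_le (constDirs μ)
    rw [finrank_euclideanSpace_fin] at this
    omega
  | succ k ih =>
    intro μ _ hk hne hproj hsteep x y hseg hxy haff
    have hfin : ∀ z ∈ segment ℝ x y, ∃ b : ℝ, rateFn μ z = (b : EReal) :=
      fun z hz => exists_coe_of_mem_edom (hseg hz)
    have hxs := left_mem_segment ℝ x y
    have hys := right_mem_segment ℝ x y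
    obtain ⟨a, ha⟩ := hfin x hxs
    obtain ⟨b, hb⟩ := hfin y hys
    rcases exists_subgrad_or (μ := μ) ((1 - 1 / 2 : ℝ) • x + (1 / 2 : ℝ) • y) with
      ⟨m, hmle, hmne⟩ | ⟨u, hu, huv⟩
    swap
    · refine hxy (eq_of_affine_of_subgrad hsteep.steep hne ha hb hu huv ?_)
      rw [haff (1 / 2) ⟨by norm_num, by norm_num⟩, ha, hb]
      norm_cast
    -- normalise `m` to a unit vector `ℓ`
    have hm0 : m ≠ 0 := by rintro rfl; simp at hmne
    have hmpos : 0 < ‖m‖⁻¹ := inv_pos.2 (norm_pos_iff.2 hm0)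
    set ℓ := ‖m‖⁻¹ • m with hℓdef
    have hin : ∀ z, ⟪ℓ, z⟫ = ‖m‖⁻¹ * ⟪m, z⟫ := fun z => real_inner_smul_left _ _ _
    have hℓ : ‖ℓ‖ = 1 := by
      rw [hℓdef, norm_smul, norm_inv, norm_norm, inv_mul_cancel₀ (norm_ne_zero_iff.2 hm0)]
    obtain ⟨c, hc⟩ : ∃ c, c = ⟪ℓ, (1 - 1 / 2 : ℝ) • x + (1 / 2 : ℝ) • y⟫ := ⟨_, rfl⟩
    have hle : ∀ᵐ z ∂μ, ⟪ℓ, z⟫ ≤ c := by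
      filter_upwards [hmle] with z hz
      rw [hc, hin, hin]
      exact mul_le_mul_of_nonneg_left hz hmpos.le
    have hnot : ¬ ∀ᵐ z ∂μ, ⟪ℓ, z⟫ = c := fun h => hmne <| by
      filter_upwards [h] with z hz
      rw [hc, hin, hin] at hz
      exact mul_left_cancel₀ hmpos.ne' hz
    -- both endpoints lie in `L = {ℓ·z = c}`, since their midpoint maximises `ℓ` on `D(I)`
    have hxc := inner_le_of_mem_edom hle (hseg hxs)
    have hyc := inner_le_of_mem_edom hle (hseg hys)
    have hcsum : c = (1 - 1 / 2) * ⟪ℓ, x⟫ + 1 / 2 * ⟪ℓ, y⟫ := by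
      rw [hc, inner_add_right, inner_smul_right, inner_smul_right]
    have hxL : ⟪ℓ, x⟫ = c := by linarith
    have hyL : ⟪ℓ, y⟫ = c := by linarith
    have hLpos : 0 < μ (hyp ℓ c) := measure_hyp_pos hle hxL (hseg hxs)
    have hFpos : 0 < μ (hyp ℓ c ∩ convSupp μ) := by
      rwa [measure_congr (inter_convSupp_ae_eq _)]
    have hFne : (hyp ℓ c ∩ convSupp μ).Nonempty := nonempty_of_measure_ne_zero hFpos.ne'
    have hA := (proj_eq_iff hℓ hne hLpos.ne').1 (hproj.condA ℓ c hℓ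
      ⟨hFne, Or.inl (convSupp_le hle)⟩ hLpos (measure_hyp_lt_one hnot))
    obtain ⟨C, hCmax, hFC⟩ := exists_isMaxProperFace (convex_convexHull ℝ _)
      (isFaceOf_hyp_inter (convex_convexHull ℝ _) (convSupp_le hle)) hFne (fun h => hnot (by
        filter_upwards [ae_mem_convSupp (μ := μ)] with z hz
        exact (h.symm.subset hz).1))
    have hCf : C ∈ facesPlus μ := ⟨hCmax, hFpos.trans_le (measure_mono hFC)⟩
    obtain ⟨ℓ', c', hℓ', hle', hsupp', hCL', hpos', hnot', hcond⟩ := facesPlus_exposed hCf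
    have hA' := (proj_eq_iff hℓ' hne hpos'.ne').1 (hproj.condA ℓ' c' hℓ' hsupp' hpos'
      (measure_hyp_lt_one hnot'))
    -- the segment lies in the hyperplane exposing `C`, because `X|L` does
    have hprobL : IsProbabilityMeasure (μ[|hyp ℓ c]) := cond_isProbabilityMeasure hLpos.ne'
    have haeL : ∀ᵐ z ∂(μ[|hyp ℓ c]), ⟪ℓ', z⟫ = c' := by
      filter_upwards [ae_cond_hyp (μ := μ) ℓ c,
        cond_absolutelyContinuous.ae_le (ae_mem_convSupp (μ := μ))] with z hz1 hz2
      exact hCL' (hFC ⟨hz1, hz2⟩)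
    have hsegL : ∀ z ∈ segment ℝ x y, ⟪ℓ', z⟫ = c' := by
      intro z hz
      obtain ⟨r, hr⟩ := hfin z hz
      have hzL : ⟪ℓ, z⟫ = c := (convex_hyp ℓ c).segment_subset hxL hyL hz
      refine inner_eq_of_mem_edom haeL ?_
      change rateFn _ z < ⊤
      rw [(rateFn_eq_iff_cond hne hle hLpos.ne' hA hzL r).1 hr]
      exact EReal.coe_lt_top _
    have hprob' : IsProbabilityMeasure (μ[|hyp ℓ' c']) := cond_isProbabilityMeasure hpos'.ne'
    obtain ⟨h1, h2⟩ := affine_transfer (g := rateFn (μ[|hyp ℓ' c']))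
      (Real.log (μ (hyp ℓ' c')).toReal)
      (fun z hz r hr =>
        (rateFn_eq_iff_cond hne hle' hpos'.ne' hA' (hsegL z hz) r).1 hr) hfin haff
    have hlt := Submodule.finrank_lt_finrank_of_lt (constDirs_lt hpos' hnot')
    refine ih (μ[|hyp ℓ' c']) (by omega)
      (hne.mono (interior_mono (edom_subset_edom_cond hpos'.ne'))) ?_ ?_ x y h1 hxy h2
    · rw [← hcond]; exact hproj.face hCf
    · rw [← hcond]; exact hsteep.face hCf

end Sufficiency

/-- **Theorem 2(2), the main result.** `I_X` is strictly convex (on all of `D(I_X)`) iff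
`int D(K_X) ≠ ∅`, `K_X` has the projection property, and `K_X` is totally steep. -/
theorem strictlyConvex_rateFn_iff {d : ℕ} (hd : 1 ≤ d)
    (μ : Measure (EuclideanSpace ℝ (Fin d))) [IsProbabilityMeasure μ] :
    StrictlyConvexOnSet (rateFn μ) (edom (rateFn μ)) ↔
      (interior (edom (logLaplace μ))).Nonempty ∧ ProjProp μ ∧ TotallySteep μ := by
  constructor
  · intro hs
    exact ⟨interior_nonempty_of_strict hs,
      fun n => (projPropN_totallySteepN_of_strict n μ hs).1,
      fun n => (projPropN_totallySteepN_of_strict n μ hs).2⟩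
  · rintro ⟨hne, hproj, hsteep⟩
    exact strict_of_conditions (d + 1) μ (by omega) hne hproj hsteep

end
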